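/- arXiv:2309.04219 — 12 statements merged into one kernel-verified Lean document; each statement's English description precedes it below -/
import Mathlib

section
/- Let n ≥ 2 and let F : F_{2^n} → F_{2^n} be any function. Then the sum of FB_F(a,b) over all ordered pairs (a,b) with a, b ∈ F_{2^n} \ {0} and a ≠ b equals 24 times the number of vanishing flats of F, i.e. Σ_{a,b ∈ F_{2^n}*, a≠b} FB_F(a,b) = 24 · #VB_{n,F}. -/
/-!
In characteristic two, the substitution `(X, a, b) ↦ (X, X + a, X + b)` turns the triples counted
by the left-hand side into the ordered triples `(x, y, z)` of pairwise distinct elements with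
`F x + F y + F z + F (x + y + z) = 0` (`sum_FBCT_eq_card_flatTriples`). Such a triple spans the
vanishing flat `{x, y, z, x + y + z}`. Conversely, a vanishing flat `s` is spanned by any three of
its elements, since the fourth is forced by the zero sum; so the triples spanning `s` are exactly
the injective triples in `s` (`span_eq_iff`), of which there are `4 * 3 * 2 = 24`
(`card_injective_triples`). Counting the triples flat by flat gives the result.
-/

open scoped Classical

/-- The Feistel Boomerang Connectivity Table entry of `F` at `(a, b)`:
the number of `X` with `F(X+a+b) + F(X+b) + F(X+a) + F(X) = 0`. -/
noncomputable def FBCT {K : Type*} [Field K] (F : K → K) (a b : K) : ℕ :=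
  Nat.card {X : K | F (X + a + b) + F (X + b) + F (X + a) + F X = 0}

/-- The set of vanishing flats of `F`: 4-element subsets `{x₁,x₂,x₃,x₄}` of pairwise
distinct elements with `x₁+x₂+x₃+x₄ = 0` and `F(x₁)+F(x₂)+F(x₃)+F(x₄) = 0`. -/
def vanishingFlats {K : Type*} [Field K] (F : K → K) : Set (Finset K) :=
  {s : Finset K | s.card = 4 ∧ (∑ x ∈ s, x) = 0 ∧ (∑ x ∈ s, F x) = 0}

/-- Ordered triples of pairwise distinct field elements which, completed by their sum `x + y + z`,
form a vanishing flat of `F` in characteristic two. -/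
noncomputable def flatTriples {K : Type*} [Field K] [Fintype K] (F : K → K) :
    Finset (K × K × K) :=
  {p | (p.1 ≠ p.2.1 ∧ p.1 ≠ p.2.2 ∧ p.2.1 ≠ p.2.2) ∧
    F p.1 + F p.2.1 + F p.2.2 + F (p.1 + p.2.1 + p.2.2) = 0}

lemma card_injective_triples {α : Type*} [Fintype α] (s : Finset α) (hs : s.card = 4) :
    (Finset.univ.filter fun p : α × α × α => (p.1 ∈ s ∧ p.2.1 ∈ s ∧ p.2.2 ∈ s) ∧
      p.1 ≠ p.2.1 ∧ p.1 ≠ p.2.2 ∧ p.2.1 ≠ p.2.2).card = 24 := by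
  have h : (s.sigma fun x => (s.erase x).sigma fun y => (s.erase x).erase y).card = 24 := by
    rw [Finset.card_sigma, Finset.sum_congr rfl (g := fun _ => 6), Finset.sum_const, hs]
    · rfl
    intro x hx
    have hx3 : (s.erase x).card = 3 := by rw [Finset.card_erase_of_mem hx, hs]
    rw [Finset.card_sigma, Finset.sum_congr rfl (g := fun _ => 2), Finset.sum_const, hx3]
    · rfl
    intro y hy
    rw [Finset.card_erase_of_mem hy, hx3]
  rw [← h]
  refine Finset.card_nbij' (fun p => ⟨p.1, p.2.1, p.2.2⟩) (fun q => (q.1, q.2.1, q.2.2))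
    ?_ ?_ ?_ ?_
  · intro p hp
    simp at hp ⊢
    grind
  · intro p hp
    simp at hp ⊢
    grind
  · intro p _; rfl
  · intro p _; rfl

section CharTwo

variable {K : Type*} [Field K] [CharP K 2]

/-- In characteristic two, the sum of three distinct elements differs from each of them. -/
lemma add_add_ne_of_distinct {x y z : K} (hxy : x ≠ y) (hxz : x ≠ z) (hyz : y ≠ z) :
    x + y + z ≠ x ∧ x + y + z ≠ y ∧ x + y + z ≠ z := by
  have h2 : (2 : K) = 0 := CharTwo.two_eq_zero
  refine ⟨fun h => hyz ?_, fun h => hxz ?_, fun h => hxy ?_⟩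
  · linear_combination h - z * h2
  · linear_combination h - z * h2
  · linear_combination h - y * h2

lemma sum_span {x y z : K} (hxy : x ≠ y) (hxz : x ≠ z) (hyz : y ≠ z) (f : K → K) :
    ∑ t ∈ ({x, y, z, x + y + z} : Finset K), f t = f x + f y + f z + f (x + y + z) := by
  obtain ⟨h1, h2, h3⟩ := add_add_ne_of_distinct hxy hxz hyz
  rw [Finset.sum_insert (by grind), Finset.sum_insert (by grind), Finset.sum_pair h3.symm]
  ring

lemma card_span {x y z : K} (hxy : x ≠ y) (hxz : x ≠ z) (hyz : y ≠ z) :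
    ({x, y, z, x + y + z} : Finset K).card = 4 := by
  obtain ⟨h1, h2, h3⟩ := add_add_ne_of_distinct hxy hxz hyz
  rw [Finset.card_insert_of_notMem (by grind), Finset.card_insert_of_notMem (by grind),
    Finset.card_pair h3.symm]

/-- Any three distinct elements of a 4-element set with zero sum determine it, the fourth element
being the sum of the three. -/
lemma span_eq_iff {s : Finset K} (hs : s.card = 4) (h0 : ∑ t ∈ s, t = 0) {x y z : K}
    (hxy : x ≠ y) (hxz : x ≠ z) (hyz : y ≠ z) :
    ({x, y, z, x + y + z} : Finset K) = s ↔ x ∈ s ∧ y ∈ s ∧ z ∈ s := by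
  have h2 : (2 : K) = 0 := CharTwo.two_eq_zero
  constructor
  · rintro rfl
    simp
  · rintro ⟨hx, hy, hz⟩
    have hsub : ({x, y, z} : Finset K) ⊆ s := by grind
    have hc : ({x, y, z} : Finset K).card = 3 := Finset.card_eq_three.2 ⟨x, y, z, hxy, hxz, hyz, rfl⟩
    have hd : (s \ {x, y, z}).card = 1 := by rw [Finset.card_sdiff_of_subset hsub, hs, hc]
    obtain ⟨w, hw⟩ := Finset.card_eq_one.1 hd
    have hsum := Finset.sum_sdiff (f := fun t : K => t) hsub
    rw [hw, Finset.sum_singleton, Finset.sum_insert (by grind), Finset.sum_pair hyz, h0] at hsum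
    have hwe : w = x + y + z := by linear_combination hsum - (x + y + z) * h2
    refine Finset.eq_of_subset_of_card_le ?_ (by rw [hs, card_span hxy hxz hyz])
    have hws : w ∈ s \ {x, y, z} := by simp [hw]
    grind

lemma sum_FBCT_eq_card_flatTriples [Fintype K] (F : K → K) :
    (∑ a : K, ∑ b : K, if a ≠ 0 ∧ b ≠ 0 ∧ a ≠ b then FBCT F a b else 0)
      = (flatTriples F).card := by
  have h2 : (2 : K) = 0 := CharTwo.two_eq_zero
  have hF : ∀ a b : K, (if a ≠ 0 ∧ b ≠ 0 ∧ a ≠ b then FBCT F a b else 0) =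
      ∑ X : K, if (a ≠ 0 ∧ b ≠ 0 ∧ a ≠ b) ∧
        F (X + a + b) + F (X + b) + F (X + a) + F X = 0 then 1 else 0 := by
    intro a b
    split_ifs with h
    · simp [FBCT, h, Nat.card_eq_fintype_card, Fintype.card_subtype]
    · simp [h]
  simp_rw [hF]
  rw [Finset.sum_congr rfl fun a _ => Finset.sum_comm, Finset.sum_comm, flatTriples,
    Finset.card_filter, Fintype.sum_prod_type]
  refine Finset.sum_congr rfl fun X _ => ?_
  symm
  rw [Fintype.sum_prod_type, ← Equiv.sum_comp (Equiv.addLeft X)]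
  refine Finset.sum_congr rfl fun a _ => ?_
  rw [← Equiv.sum_comp (Equiv.addLeft X)]
  refine Finset.sum_congr rfl fun b _ => ?_
  have e : X + (X + a) + (X + b) = X + a + b := by linear_combination X * h2
  have e' : F (X + a + b) + F (X + b) + F (X + a) + F X =
      F X + F (X + a) + F (X + b) + F (X + a + b) := by ring
  simp [e, e', eq_comm (a := X)]

lemma card_flatTriples [Fintype K] (F : K → K) :
    (flatTriples F).card = 24 * Nat.card (vanishingFlats F) := by
  have hmaps : ∀ p ∈ flatTriples F,
      ({p.1, p.2.1, p.2.2, p.1 + p.2.1 + p.2.2} : Finset K) ∈ (vanishingFlats F).toFinset := by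
    intro p hp
    simp only [flatTriples, Finset.mem_filter, Finset.mem_univ, true_and] at hp
    obtain ⟨⟨h1, h2, h3⟩, h⟩ := hp
    rw [Set.mem_toFinset]
    refine ⟨card_span h1 h2 h3, ?_, ?_⟩
    · rw [sum_span h1 h2 h3 fun t => t]
      exact CharTwo.add_self_eq_zero _
    · rw [sum_span h1 h2 h3, h]
  rw [Finset.card_eq_sum_card_fiberwise hmaps, Finset.sum_congr rfl (g := fun _ => 24),
    Finset.sum_const, Nat.card_eq_fintype_card, Set.toFinset_card, smul_eq_mul, mul_comm]
  intro s hs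
  rw [Set.mem_toFinset] at hs
  obtain ⟨hs4, hs0, hsF⟩ := hs
  rw [← card_injective_triples s hs4]
  congr 1
  ext ⟨x, y, z⟩
  simp only [flatTriples, Finset.mem_filter, Finset.mem_univ, true_and]
  constructor
  · rintro ⟨⟨⟨h1, h2, h3⟩, -⟩, h⟩
    exact ⟨(span_eq_iff hs4 hs0 h1 h2 h3).1 h, h1, h2, h3⟩
  · rintro ⟨hmem, h1, h2, h3⟩
    have h := (span_eq_iff hs4 hs0 h1 h2 h3).2 hmem
    refine ⟨⟨⟨h1, h2, h3⟩, ?_⟩, h⟩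
    rw [← sum_span h1 h2 h3, h, hsF]

end CharTwo

theorem sum_FBCT_eq_24_mul_card_vanishingFlats (n : ℕ) (hn : 2 ≤ n)
    (F : GaloisField 2 n → GaloisField 2 n) :
    letI : Fintype (GaloisField 2 n) := Fintype.ofFinite _
    (∑ a : GaloisField 2 n, ∑ b : GaloisField 2 n,
        if a ≠ 0 ∧ b ≠ 0 ∧ a ≠ b then FBCT F a b else 0)
      = 24 * Nat.card (vanishingFlats F) := by
  letI : Fintype (GaloisField 2 n) := Fintype.ofFinite _
  exact (sum_FBCT_eq_card_flatTriples F).trans (card_flatTriples F)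
end

section
/- Let p be an odd prime and n a positive integer with p^n ≡ 2 (mod 3). Let d = (2p^n − 1)/3 and F(X) = X^d on F_{p^n}. Then for all a, b ∈ F_{p^n}: ∇_F(a,b) = 1 if ab ≠ 0, and ∇_F(a,b) = p^n if ab = 0. In particular, F is second-order zero differential 1-uniform. -/
/-!
Since `3 * ((2q - 1) / 3) = 2q - 1` and `x ^ (2q - 1) = x` on the field with `q = p ^ n` elements,
`F` is a right inverse of the cube map; it is also odd. Put `x = F (X+a+b)`, `y = F (X+b)`,
`z = F (X+a)`, `w = F X`. A solution `X` satisfies both `x + w = y + z` and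
`x³ + w³ = y³ + z³`, so `3 (x + w) (y z - x w) = 0` (`zero_sum_or_eq`). Either `x + w = 0`, and
cubing `x = -w` gives `2X = -(a+b)`, or `{x, w} = {y, z}`, and cubing gives `a = 0` or `b = 0`.
Conversely `X = -(a+b)/2` is a solution because `F` is odd. The case `a b = 0` is immediate.
-/

open scoped Classical

/-- The second-order zero differential spectrum of `F` at `(a, b)` (odd characteristic):
the number of `X` with `F(X+a+b) − F(X+b) − F(X+a) + F(X) = 0`. -/
noncomputable def nabla {K : Type*} [Field K] (F : K → K) (a b : K) : ℕ :=
  Nat.card {X : K | F (X + a + b) - F (X + b) - F (X + a) + F X = 0}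

/-- Two pairs with the same sum and the same sum of cubes either agree up to order or have
sum zero, when `3 ≠ 0`. -/
lemma zero_sum_or_eq {K : Type*} [Field K] (h3 : (3 : K) ≠ 0) {x y z w : K}
    (h1 : x + w = y + z) (h2 : x ^ 3 + w ^ 3 = y ^ 3 + z ^ 3) :
    x = -w ∨ x = y ∨ x = z := by
  have h : 3 * ((x + w) * ((x - y) * (x - z))) = 0 := by
    obtain rfl : w = y + z - x := by linear_combination h1
    linear_combination h2
  rcases mul_eq_zero.1 h with h | h
  · exact absurd h h3
  rcases mul_eq_zero.1 h with h | h
  · exact Or.inl (eq_neg_of_add_eq_zero_left h)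
  rcases mul_eq_zero.1 h with h | h
  · exact Or.inr (Or.inl (sub_eq_zero.1 h))
  · exact Or.inr (Or.inr (sub_eq_zero.1 h))

lemma nabla_eq_one_of_cube {K : Type*} [Field K] (h2 : (2 : K) ≠ 0) (h3 : (3 : K) ≠ 0)
    {F : K → K} (hcube : ∀ X, F X ^ 3 = X) (hodd : ∀ X, F (-X) = -F X)
    {a b : K} (ha : a ≠ 0) (hb : b ≠ 0) : nabla F a b = 1 := by
  have hinj : ∀ {u v : K}, F u = F v → u = v := fun {u v} h => by
    rw [← hcube u, ← hcube v, h]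
  have hset : {X : K | F (X + a + b) - F (X + b) - F (X + a) + F X = 0} = {-(a + b) / 2} := by
    ext X
    simp only [Set.mem_ofPred_eq, Set.mem_singleton_iff]
    constructor
    · intro h
      rcases zero_sum_or_eq h3 (x := F (X + a + b)) (y := F (X + b)) (z := F (X + a)) (w := F X)
        (by linear_combination h) (by simp only [hcube]; ring) with h | h | h
      · rw [← hodd] at h
        rw [eq_div_iff h2]
        linear_combination hinj h
      · exact absurd (by linear_combination hinj h) ha
      · exact absurd (by linear_combination hinj h) hb
    · intro h
      have hX : 2 * X = -(a + b) := by rw [h]; field_simp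
      have e1 : X + a + b = -X := by linear_combination hX
      have e2 : X + b = -(X + a) := by linear_combination hX
      rw [e1, e2, hodd, hodd]
      ring
  simp [nabla, hset]

theorem nabla_pow_two_pow_n_sub_one_div_three (p n : ℕ) [Fact p.Prime] (hp : Odd p)
    (hn : 0 < n) (h3 : p ^ n % 3 = 2)
    (F : GaloisField p n → GaloisField p n)
    (hF : ∀ X, F X = X ^ ((2 * p ^ n - 1) / 3)) :
    (∀ a b : GaloisField p n,
      (a * b ≠ 0 → nabla F a b = 1) ∧ (a * b = 0 → nabla F a b = p ^ n)) ∧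
    IsGreatest {k : ℕ | ∃ a b : GaloisField p n, a ≠ 0 ∧ b ≠ 0 ∧ k = nabla F a b} 1 := by
  have hprime : p.Prime := Fact.out
  have hcard : Nat.card (GaloisField p n) = p ^ n := GaloisField.card p n hn.ne'
  have k2 : (2 : GaloisField p n) ≠ 0 := by
    intro h
    have hd : p ∣ 2 := (CharP.cast_eq_zero_iff (GaloisField p n) p 2).1 (by exact_mod_cast h)
    rw [(Nat.prime_dvd_prime_iff_eq hprime Nat.prime_two).1 hd] at hp
    exact absurd hp (by decide)
  have k3 : (3 : GaloisField p n) ≠ 0 := by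
    intro h
    have hd : p ∣ 3 := (CharP.cast_eq_zero_iff (GaloisField p n) p 3).1 (by exact_mod_cast h)
    rw [(Nat.prime_dvd_prime_iff_eq hprime Nat.prime_three).1 hd] at h3
    have : 3 ∣ 3 ^ n := dvd_pow_self 3 hn.ne'
    omega
  have hcube : ∀ X, F X ^ 3 = X := by
    intro X
    have hq : X ^ (p ^ n) = X := by
      let _ := Fintype.ofFinite (GaloisField p n)
      rw [← hcard, Nat.card_eq_fintype_card, FiniteField.pow_card]
    have e : (2 * p ^ n - 1) / 3 * 3 = p ^ n + (p ^ n - 1) := by omega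
    rw [hF, ← pow_mul, e, pow_add, hq, ← pow_succ', Nat.sub_add_cancel (by omega), hq]
  have hodd : ∀ X, F (-X) = -F X := by
    intro X
    have : Odd ((2 * p ^ n - 1) / 3) := by rw [Nat.odd_iff]; omega
    rw [hF, hF, this.neg_pow]
  have hone : ∀ a b : GaloisField p n, a ≠ 0 → b ≠ 0 → nabla F a b = 1 :=
    fun a b ha hb => nabla_eq_one_of_cube k2 k3 hcube hodd ha hb
  refine ⟨fun a b => ⟨fun h => hone a b (left_ne_zero_of_mul h) (right_ne_zero_of_mul h),
    fun h => ?_⟩, ⟨1, 1, one_ne_zero, one_ne_zero, (hone 1 1 one_ne_zero one_ne_zero).symm⟩, ?_⟩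
  · have hset : {X | F (X + a + b) - F (X + b) - F (X + a) + F X = 0} = Set.univ := by
      ext X
      rcases mul_eq_zero.1 h with rfl | rfl <;> simp
    rw [nabla, hset, Nat.card_univ, hcard]
  · rintro k ⟨a, b, ha, hb, rfl⟩
    exact (hone a b ha hb).le
end

section
/- Let k, n be positive integers with gcd(k, 2n) = 1, let d = (5^k + 1)/2, and let F(X) = X^d on F_{5^n}. Then ∇_F(a,b) ≤ 1 for all a, b ∈ F_{5^n} with ab ≠ 0; that is, F is second-order zero differential 1-uniform over F_{5^n}. -/
/-!
The substitution `Y = X + (a + b) / 2`, `u = (a + b) / 2`, `v = (a - b) / 2` turns the equation into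
`(Y + u)^d + (Y - u)^d = (Y + v)^d + (Y - v)^d`. The claim is that `Y = 0` is its only possible
solution; otherwise one may scale to `Y = 1`, and it suffices that
`G(u) = (1 + u)^d + (1 - u)^d` determines `u ^ 2`, because `u ^ 2 - v ^ 2 = a * b`.

Over the algebraic closure write `u = (t + t⁻¹) / 2`, so that `2t(1 + u) = (t + 1)^2` and
`2t(1 - u) = -(t - 1)^2`. As `2d = 5^k + 1` and `d` is odd (`k` being odd), `G(u)` is a constant
times `t^e + t^(-e)` with `e = (5^k - 1) / 2` (`dickson_identity`). Hence, if `v` comes from `s` in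
the same way, `G(u) = G(v)` forces `t^e = s^(±e)`. Both `t` and `s` are quadratic over the field
with `5^n` elements, so `w = t / s` or `w = t * s` satisfies `w^e = 1` and `w^(5^(2n) - 1) = 1`.
Since `gcd(k, 2n) = 1` and `e ≡ 2 mod 4`, this gives `w ^ 2 = 1` (`sq_eq_one_of_pow`),
and so `u ^ 2 = v ^ 2`.
-/


open scoped Classical

instance : Fact (Nat.Prime 5) := ⟨by norm_num⟩

/-- For odd `k`, the exponents `d = (5^k + 1) / 2` and `e = (5^k - 1) / 2` satisfy
`5^k = 2e + 1` and `d = e + 1`, and `e ≡ 2 mod 4`. -/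
lemma exists_exponent {k : ℕ} (hk : Odd k) :
    ∃ m : ℕ, 5 ^ k = 2 * (4 * m + 2) + 1 ∧ (5 ^ k + 1) / 2 = 4 * m + 3 := by
  obtain ⟨j, rfl⟩ := hk
  have h : 5 ^ (2 * j + 1) % 8 = 5 := by
    rw [pow_succ, pow_mul, Nat.mul_mod, Nat.pow_mod]
    norm_num
  generalize 5 ^ (2 * j + 1) = q at *
  exact ⟨q / 8, by omega, by omega⟩

lemma sq_eq_one_of_pow {L : Type*} [Field L] {k n m : ℕ} (hgcd : Nat.gcd k (2 * n) = 1)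
    (hm : 5 ^ k = 2 * (4 * m + 2) + 1) {w : L} (hw : w ≠ 0)
    (hwe : w ^ (4 * m + 2) = 1) (hwn : w ^ 5 ^ (2 * n) = w) : w ^ 2 = 1 := by
  have h1 : orderOf w ∣ 4 * m + 2 := orderOf_dvd_of_pow_eq_one hwe
  have h2 : orderOf w ∣ 5 ^ (2 * n) - 1 := by
    apply orderOf_dvd_of_pow_eq_one
    apply mul_right_cancel₀ hw
    rw [← pow_succ, Nat.sub_add_cancel (Nat.one_le_pow _ _ (by norm_num)), hwn, one_mul]
  have h3 : orderOf w ∣ 5 ^ k - 1 := by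
    rw [hm, Nat.add_sub_cancel]
    exact h1.mul_left 2
  have h4 : orderOf w ∣ 4 := by
    have := Nat.dvd_gcd h3 h2
    rwa [Nat.pow_sub_one_gcd_pow_sub_one, hgcd] at this
  apply orderOf_dvd_iff_pow_eq_one.mp
  have h5 : orderOf w ∣ (4 * m + 2) - 4 * m := Nat.dvd_sub h1 (h4.mul_right m)
  simpa using h5

/-- `(1 + u)^d + (1 - u)^d` is a constant multiple of `t^e + t^(-e)` when `u = (t + t⁻¹) / 2`,
stated with denominators cleared. -/
lemma dickson_identity {L : Type*} [Field L] [CharP L 5] {k m : ℕ}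
    (hm : 5 ^ k = 2 * (4 * m + 2) + 1) {t u : L} (ht : t ≠ 0) (htu : t ^ 2 + 1 = 2 * u * t) :
    2 ^ (4 * m + 3) * t ^ (4 * m + 2) * ((1 + u) ^ (4 * m + 3) + (1 - u) ^ (4 * m + 3))
      = 2 * ((t ^ (4 * m + 2)) ^ 2 + 1) := by
  have h1 : 2 * t * (1 + u) = (t + 1) ^ 2 := by linear_combination -htu
  have h2 : 2 * t * (1 - u) = -(t - 1) ^ 2 := by linear_combination htu
  have hodd : Odd (4 * m + 3) := ⟨2 * m + 1, by ring⟩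
  have hexp : 2 * (4 * m + 3) = 5 ^ k + 1 := by omega
  have h3 : (2 * t * (1 + u)) ^ (4 * m + 3) = (t ^ 5 ^ k + 1) * (t + 1) := by
    rw [h1, ← pow_mul, hexp, pow_succ, add_pow_char_pow, one_pow]
  have h4 : (2 * t * (1 - u)) ^ (4 * m + 3) = -((t ^ 5 ^ k - 1) * (t - 1)) := by
    rw [h2, hodd.neg_pow, ← pow_mul, hexp, pow_succ, sub_pow_char_pow, one_pow]
  rw [hm] at h3 h4
  rw [mul_pow, mul_pow] at h3 h4
  apply mul_left_cancel₀ ht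
  linear_combination h3 + h4

/-- An element `t` with `t + t⁻¹` in the field with `5^n` elements has `t^(5^n) = t^(±1)`, so it
lies in the field with `5^(2n)` elements. -/
lemma pow_card_sq {L : Type*} [Field L] [CharP L 5] {n : ℕ} {t u : L}
    (htu : t ^ 2 + 1 = 2 * u * t) (hu : u ^ 5 ^ n = u) :
    t ^ 5 ^ (2 * n) = t := by
  have h2 : (2 : L) ^ 5 ^ n = 2 := by
    rw [← one_add_one_eq_two, add_pow_char_pow, one_pow]
  have h := congrArg (· ^ 5 ^ n) htu
  simp only [add_pow_char_pow, mul_pow, one_pow, hu, h2] at h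
  rw [← pow_mul, mul_comm 2, pow_mul] at h
  have hprod : (t ^ 5 ^ n - t) * (t ^ 5 ^ n * t - 1) = 0 := by
    linear_combination t * h - t ^ 5 ^ n * htu
  rw [two_mul, pow_add, pow_mul]
  rcases mul_eq_zero.mp hprod with h0 | h0
  · rw [sub_eq_zero.mp h0, sub_eq_zero.mp h0]
  · have hinv : t ^ 5 ^ n = t⁻¹ := eq_inv_of_mul_eq_one_left (sub_eq_zero.mp h0)
    rw [hinv, inv_pow, hinv, inv_inv]

lemma exists_param {L : Type*} [Field L] [IsAlgClosed L] [CharP L 5] (u : L) :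
    ∃ t : L, t ≠ 0 ∧ t ^ 2 + 1 = 2 * u * t := by
  obtain ⟨z, hz⟩ := IsAlgClosed.exists_pow_nat_eq (u ^ 2 - 1) (n := 2) (by norm_num)
  have h : (u + z) ^ 2 + 1 = 2 * u * (u + z) := by linear_combination hz
  refine ⟨u + z, fun h0 => ?_, h⟩
  rw [h0] at h
  norm_num at h

/-- The function `u ↦ (1 + u)^d + (1 - u)^d` on the field with `5^n` elements determines `u ^ 2`. -/
lemma sq_eq_of_sum_eq {L : Type*} [Field L] [IsAlgClosed L] [CharP L 5] {k n m : ℕ}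
    (hgcd : Nat.gcd k (2 * n) = 1) (hm : 5 ^ k = 2 * (4 * m + 2) + 1) {u v : L}
    (hu : u ^ 5 ^ n = u) (hv : v ^ 5 ^ n = v)
    (h : (1 + u) ^ (4 * m + 3) + (1 - u) ^ (4 * m + 3)
      = (1 + v) ^ (4 * m + 3) + (1 - v) ^ (4 * m + 3)) : u ^ 2 = v ^ 2 := by
  have h2 : (2 : L) ≠ 0 := by
    have := CharP.cast_eq_zero_iff L 5 2
    norm_num at this
    exact this
  obtain ⟨t, ht, htu⟩ := exists_param u
  obtain ⟨s, hs, hsv⟩ := exists_param v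
  have ht1 := dickson_identity hm ht htu
  have hs1 := dickson_identity hm hs hsv
  have ht2 := pow_card_sq htu hu
  have hs2 := pow_card_sq hsv hv
  have hprod : (t ^ (4 * m + 2) - s ^ (4 * m + 2)) * ((t * s) ^ (4 * m + 2) - 1) = 0 := by
    rw [h] at ht1
    rw [mul_pow]
    apply mul_left_cancel₀ h2
    linear_combination t ^ (4 * m + 2) * hs1 - s ^ (4 * m + 2) * ht1
  have hfinal : t ^ 2 = s ^ 2 ∨ (t * s) ^ 2 = 1 := by
    rcases mul_eq_zero.mp hprod with h0 | h0
    · left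
      have := sq_eq_one_of_pow hgcd hm (div_ne_zero ht hs)
        (by rw [div_pow, sub_eq_zero.mp h0, div_self (pow_ne_zero _ hs)])
        (by rw [div_pow, ht2, hs2])
      rwa [div_pow, div_eq_one_iff_eq (pow_ne_zero _ hs)] at this
    · right
      exact sq_eq_one_of_pow hgcd hm (mul_ne_zero ht hs) (sub_eq_zero.mp h0)
        (by rw [mul_pow, ht2, hs2])
  -- It remains to compare `(t ^ 2 + 1) ^ 2 * s ^ 2` with `(s ^ 2 + 1) ^ 2 * t ^ 2`, whose difference
  -- is `(t ^ 2 - s ^ 2) * (t ^ 2 * s ^ 2 - 1)`.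
  have hz : (t ^ 2 - s ^ 2) * ((t * s) ^ 2 - 1) = 0 := by
    rcases hfinal with h0 | h0 <;> rw [h0] <;> ring
  have hne : (2 * t * s) ^ 2 ≠ 0 := pow_ne_zero _ (mul_ne_zero (mul_ne_zero h2 ht) hs)
  apply mul_left_cancel₀ hne
  linear_combination hz - (t ^ 2 + 1 + 2 * u * t) * s ^ 2 * htu
    + (s ^ 2 + 1 + 2 * v * s) * t ^ 2 * hsv

theorem nabla_pow_5k_add_one_div_two_le_one (k n : ℕ) (hk : 0 < k) (hn : 0 < n)
    (hgcd : Nat.gcd k (2 * n) = 1)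
    (F : GaloisField 5 n → GaloisField 5 n)
    (hF : ∀ X, F X = X ^ ((5 ^ k + 1) / 2)) :
    ∀ a b : GaloisField 5 n, a * b ≠ 0 → nabla F a b ≤ 1 := by
  intro a b hab
  have hodd : Odd k := by
    rw [← Nat.not_even_iff_odd, even_iff_two_dvd]
    intro h
    have := Nat.dvd_gcd h (dvd_mul_right 2 n)
    omega
  obtain ⟨m, hm, hd⟩ := exists_exponent hodd
  rw [hd] at hF
  have h5 : (5 : GaloisField 5 n) = 0 := by exact_mod_cast CharP.cast_eq_zero (GaloisField 5 n) 5
  have hcard : ∀ x : GaloisField 5 n, x ^ 5 ^ n = x := by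
    intro x
    have := Fintype.ofFinite (GaloisField 5 n)
    have hc := FiniteField.pow_card x
    rwa [← Nat.card_eq_fintype_card, GaloisField.card 5 n hn.ne'] at hc
  -- In characteristic `5`, `1 / 2 = 3`, and the only possible solution is `-(a + b) / 2`.
  have key : ∀ X, F (X + a + b) - F (X + b) - F (X + a) + F X = 0 → X + 3 * (a + b) = 0 := by
    intro X hX
    by_contra hY
    obtain ⟨Y, hYdef⟩ : ∃ Y, Y = X + 3 * (a + b) := ⟨_, rfl⟩
    rw [← hYdef] at hY
    let u := 3 * (a + b) / Y
    let v := 3 * (a - b) / Y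
    have hu : Y * u = 3 * (a + b) := mul_div_cancel₀ _ hY
    have hv : Y * v = 3 * (a - b) := mul_div_cancel₀ _ hY
    have e1 : X + a + b = Y * (1 + u) := by linear_combination -hu - hYdef - (a + b) * h5
    have e2 : X + b = Y * (1 - v) := by linear_combination hv - hYdef - b * h5
    have e3 : X + a = Y * (1 + v) := by linear_combination -hv - hYdef - a * h5
    have e4 : X = Y * (1 - u) := by linear_combination hu - hYdef
    rw [e1, e2, e3, e4] at hX
    simp only [hF, mul_pow] at hX
    have hG : (1 + u) ^ (4 * m + 3) + (1 - u) ^ (4 * m + 3)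
        = (1 + v) ^ (4 * m + 3) + (1 - v) ^ (4 * m + 3) := by
      apply mul_left_cancel₀ (pow_ne_zero (4 * m + 3) hY)
      linear_combination hX
    let φ := algebraMap (GaloisField 5 n) (AlgebraicClosure (GaloisField 5 n))
    have : CharP (AlgebraicClosure (GaloisField 5 n)) 5 :=
      charP_of_injective_algebraMap φ.injective 5
    have hsq : φ u ^ 2 = φ v ^ 2 := by
      apply sq_eq_of_sum_eq hgcd hm
      · rw [← map_pow, hcard]
      · rw [← map_pow, hcard]
      · simpa using congrArg φ hG
    rw [← map_pow, ← map_pow] at hsq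
    have huv := φ.injective hsq
    apply hab
    linear_combination Y ^ 2 * huv - (Y * u + 3 * (a + b)) * hu + (Y * v + 3 * (a - b)) * hv
      - 7 * a * b * h5
  unfold nabla
  rw [Finite.card_le_one_iff_subsingleton]
  constructor
  rintro ⟨x, hx⟩ ⟨y, hy⟩
  apply Subtype.ext
  exact add_right_cancel ((key x hx).trans (key y hy).symm)
end

section
/- Let p > 3 be a prime, n > 1 an integer, and F(X) = X^4 on F_{p^n}. Then for all a, b ∈ F_{p^n}: if ab = 0 then ∇_F(a,b) = p^n; if ab ≠ 0 then ∇_F(a,b) = 0 when η(−(a²+b²)/3) = −1, ∇_F(a,b) = 1 when a² + b² = 0, and ∇_F(a,b) = 2 when η(−(a²+b²)/3) = 1. In particular, F is second-order zero differential 2-uniform. -/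
/-!
Expanding, `(X+a+b)⁴ - (X+b)⁴ - (X+a)⁴ + X⁴ = ab (3 (2X+a+b)² + a² + b²)`. So for `ab ≠ 0` the
zeros `X` correspond, via `Y = 2X+a+b`, to the square roots `Y` of `-(a²+b²)/3`, and the three
cases are the number of square roots of a nonsquare, of zero and of a nonzero square
(`nabla_eq_zero`, `nabla_eq_one`, `nabla_eq_two`).

The value `2` is attained because there are nonzero `a, b` with `-(a²+b²)/3` a nonzero square
(`exists_quadChar_eq_one`). If `-3` is a nonsquare, write a nonsquare as `a²+b²`: neither term
vanishes, and the product of two nonsquares is a square. If `-3` is a square, a Pythagorean triple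
`(t²-1)² + (2t)² = (t²+1)²` with `t⁵ ≠ t` does it; such a `t` exists since `pⁿ > 5`.
-/

open scoped Classical

/-- The quadratic character of a finite field: `1` on nonzero squares, `-1` on
nonsquares, `0` at `0`. -/
noncomputable def quadChar {K : Type*} [Field K] (x : K) : ℤ :=
  if x = 0 then 0 else if IsSquare x then 1 else -1

lemma second_diff_eq_zero_iff {K : Type*} [Field K] (h3 : (3 : K) ≠ 0) {a b : K}
    (hab : a * b ≠ 0) (X : K) :
    (X + a + b) ^ 4 - (X + b) ^ 4 - (X + a) ^ 4 + X ^ 4 = 0 ↔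
      (2 * X + a + b) ^ 2 = -(a ^ 2 + b ^ 2) / 3 := by
  have key : (X + a + b) ^ 4 - (X + b) ^ 4 - (X + a) ^ 4 + X ^ 4 =
      (a * b) * (3 * (2 * X + a + b) ^ 2 + (a ^ 2 + b ^ 2)) := by ring
  rw [key, mul_eq_zero, or_iff_right hab, eq_div_iff h3]
  constructor <;> intro h <;> linear_combination h

lemma nabla_eq_ncard {K : Type*} [Field K] {F : K → K} (hF : ∀ X, F X = X ^ 4)
    (h3 : (3 : K) ≠ 0) {a b : K} (hab : a * b ≠ 0) :
    nabla F a b = {X : K | (2 * X + a + b) ^ 2 = -(a ^ 2 + b ^ 2) / 3}.ncard := by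
  unfold nabla
  simp only [hF, second_diff_eq_zero_iff h3 hab, Nat.card_coe_set_eq]

lemma nabla_eq_zero {K : Type*} [Field K] {F : K → K} (hF : ∀ X, F X = X ^ 4)
    (h3 : (3 : K) ≠ 0) {a b : K} (hab : a * b ≠ 0)
    (h : quadChar (-(a ^ 2 + b ^ 2) / 3) = -1) :
    nabla F a b = 0 := by
  rw [nabla_eq_ncard hF h3 hab]
  have hs : ¬ IsSquare (-(a ^ 2 + b ^ 2) / 3) := by
    intro hs
    unfold quadChar at h
    split_ifs at h
  convert Set.ncard_empty K
  ext X
  simp only [Set.mem_ofPred_eq, Set.mem_empty_iff_false, iff_false]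
  intro hX
  exact hs (hX ▸ IsSquare.sq _)

lemma nabla_eq_one {K : Type*} [Field K] {F : K → K} (hF : ∀ X, F X = X ^ 4)
    (h2 : (2 : K) ≠ 0) (h3 : (3 : K) ≠ 0) {a b : K} (hab : a * b ≠ 0)
    (h : a ^ 2 + b ^ 2 = 0) :
    nabla F a b = 1 := by
  rw [nabla_eq_ncard hF h3 hab]
  convert Set.ncard_singleton ((-a - b) / 2)
  ext X
  simp only [Set.mem_ofPred_eq, Set.mem_singleton_iff, h, neg_zero, zero_div, sq_eq_zero_iff]
  rw [eq_div_iff h2]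
  constructor <;> intro h <;> linear_combination h

lemma nabla_eq_two {K : Type*} [Field K] {F : K → K} (hF : ∀ X, F X = X ^ 4)
    (h2 : (2 : K) ≠ 0) (h3 : (3 : K) ≠ 0) {a b : K} (hab : a * b ≠ 0)
    (h : quadChar (-(a ^ 2 + b ^ 2) / 3) = 1) :
    nabla F a b = 2 := by
  rw [nabla_eq_ncard hF h3 hab]
  generalize -(a ^ 2 + b ^ 2) / 3 = d at h
  have hd : d ≠ 0 ∧ IsSquare d := by
    unfold quadChar at h
    split_ifs at h <;> simp_all
  obtain ⟨hd0, r, rfl⟩ := hd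
  have hr : r ≠ 0 := left_ne_zero_of_mul hd0
  have hne : (r - a - b) / 2 ≠ (-r - a - b) / 2 := by
    intro he
    rw [div_left_inj' h2] at he
    have : 2 * r = 0 := by linear_combination he
    exact (mul_ne_zero h2 hr) this
  convert Set.ncard_pair hne
  ext X
  simp only [Set.mem_ofPred_eq, Set.mem_insert_iff, Set.mem_singleton_iff]
  rw [eq_div_iff h2, eq_div_iff h2, ← sq, sq_eq_sq_iff_eq_or_eq_neg]
  refine or_congr ?_ ?_ <;> constructor <;> intro h <;> linear_combination h

lemma quadChar_trichotomy {K : Type*} [Field K] (x : K) :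
    quadChar x = -1 ∨ x = 0 ∨ quadChar x = 1 := by
  unfold quadChar
  split_ifs <;> simp_all

/-- The roots of `t⁵ - t` are `0` and the fourth roots of unity, for which the Pythagorean triple
`(t²-1, 2t, t²+1)` degenerates. -/
lemma exists_pow_five_ne {K : Type*} [Field K] [Fintype K] (hK : 5 < Fintype.card K) :
    ∃ t : K, t ^ 5 ≠ t := by
  by_contra! hc
  have hne : (Polynomial.X ^ 5 - Polynomial.X : Polynomial K) ≠ 0 :=
    FiniteField.X_pow_card_sub_X_ne_zero K (by norm_num)
  apply hne
  apply Polynomial.eq_zero_of_natDegree_lt_card_of_eval_eq_zero _ Function.injective_id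
  · intro t
    simp [hc t]
  · rwa [FiniteField.X_pow_card_sub_X_natDegree_eq K (by norm_num)]

lemma exists_quadChar_eq_one {K : Type*} [Field K] [Fintype K] (h2 : (2 : K) ≠ 0)
    (h3 : (3 : K) ≠ 0) (hK : 5 < Fintype.card K) :
    ∃ a b : K, a ≠ 0 ∧ b ≠ 0 ∧ quadChar (-(a ^ 2 + b ^ 2) / 3) = 1 := by
  have hchar : ringChar K ≠ 2 := fun h => h2 (by
    have := ringChar.Nat.cast_ringChar (R := K)
    rw [h] at this
    exact_mod_cast this)
  have hone : ∀ x : K, x ≠ 0 → IsSquare x → quadChar x = 1 := by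
    intro x hx hs
    simp [quadChar, hx, hs]
  by_cases hs : IsSquare (-3 : K)
  · obtain ⟨s, hs⟩ := hs
    obtain ⟨t, ht⟩ := exists_pow_five_ne hK
    have hprod : t * (t ^ 2 - 1) * (t ^ 2 + 1) ≠ 0 := by
      intro h
      apply ht
      linear_combination h
    have h12 := left_ne_zero_of_mul hprod
    have hplus := right_ne_zero_of_mul hprod
    have hs0 : s ≠ 0 := by
      rintro rfl
      apply h3
      linear_combination -hs
    refine ⟨t ^ 2 - 1, 2 * t, right_ne_zero_of_mul h12,
      mul_ne_zero h2 (left_ne_zero_of_mul h12), ?_⟩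
    have he : -((t ^ 2 - 1) ^ 2 + (2 * t) ^ 2) / 3 = (s * (t ^ 2 + 1) / 3) ^ 2 := by
      field_simp
      linear_combination (t ^ 2 + 1) ^ 2 * hs
    rw [he]
    exact hone _ (pow_ne_zero 2 (div_ne_zero (mul_ne_zero hs0 hplus) h3)) (IsSquare.sq _)
  · obtain ⟨u, hu⟩ := FiniteField.exists_nonsquare hchar
    obtain ⟨a, b, hab⟩ : ∃ a b : K, a ^ 2 + b ^ 2 = u := by
      obtain ⟨a, b, hab⟩ := FiniteField.exists_root_sum_quadratic
        (f := (Polynomial.X ^ 2 : Polynomial K)) (g := Polynomial.X ^ 2 - Polynomial.C u)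
        (Polynomial.degree_X_pow 2) (Polynomial.degree_X_pow_sub_C (by decide) _)
        (FiniteField.odd_card_of_char_ne_two hchar)
      refine ⟨a, b, ?_⟩
      simp only [Polynomial.eval_pow, Polynomial.eval_X, Polynomial.eval_sub,
        Polynomial.eval_C] at hab
      linear_combination hab
    have ha : a ≠ 0 := by
      rintro rfl
      exact hu ⟨b, by rw [← hab]; ring⟩
    have hb : b ≠ 0 := by
      rintro rfl
      exact hu ⟨a, by rw [← hab]; ring⟩
    have hu0 : u ≠ 0 := by
      rintro rfl
      exact hu IsSquare.zero
    refine ⟨a, b, ha, hb, ?_⟩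
    rw [hab]
    apply hone _ (div_ne_zero (neg_ne_zero.mpr hu0) h3)
    have hm : IsSquare (-3 * u) := by
      rw [← quadraticChar_one_iff_isSquare (mul_ne_zero (neg_ne_zero.mpr h3) hu0), map_mul,
        quadraticChar_neg_one_iff_not_isSquare.mpr hs,
        quadraticChar_neg_one_iff_not_isSquare.mpr hu]
      norm_num
    obtain ⟨r, hr⟩ := hm
    refine ⟨r / 3, ?_⟩
    field_simp
    linear_combination hr

theorem nabla_pow_four (p n : ℕ) [Fact p.Prime] (hp : 3 < p) (hn : 1 < n)
    (F : GaloisField p n → GaloisField p n) (hF : ∀ X, F X = X ^ 4) :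
    (∀ a b : GaloisField p n,
      (a * b = 0 → nabla F a b = p ^ n) ∧
      (a * b ≠ 0 →
        (quadChar (-(a ^ 2 + b ^ 2) / 3) = -1 → nabla F a b = 0) ∧
        (a ^ 2 + b ^ 2 = 0 → nabla F a b = 1) ∧
        (quadChar (-(a ^ 2 + b ^ 2) / 3) = 1 → nabla F a b = 2))) ∧
    IsGreatest {k : ℕ | ∃ a b : GaloisField p n, a ≠ 0 ∧ b ≠ 0 ∧ k = nabla F a b} 2 := by
  have hcard : Nat.card (GaloisField p n) = p ^ n := GaloisField.card p n (by omega)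
  have hcast : ∀ m : ℕ, 0 < m → m < p → (m : GaloisField p n) ≠ 0 := by
    intro m hm hmp h
    rw [CharP.cast_eq_zero_iff (GaloisField p n) p] at h
    exact absurd (Nat.le_of_dvd hm h) (by omega)
  have h2 : (2 : GaloisField p n) ≠ 0 := by exact_mod_cast hcast 2 (by norm_num) (by omega)
  have h3 : (3 : GaloisField p n) ≠ 0 := by exact_mod_cast hcast 3 (by norm_num) hp
  refine ⟨fun a b => ⟨fun hab => ?_, fun hab => ⟨nabla_eq_zero hF h3 hab,
    nabla_eq_one hF h2 h3 hab, nabla_eq_two hF h2 h3 hab⟩⟩, ?_, ?_⟩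
  · rw [← hcard, ← Nat.card_univ]
    unfold nabla
    congr 2
    ext X
    simp only [hF, Set.mem_ofPred_eq, Set.mem_univ, iff_true]
    rcases mul_eq_zero.mp hab with rfl | rfl <;> ring
  · let _ := Fintype.ofFinite (GaloisField p n)
    have hK : 5 < Fintype.card (GaloisField p n) := by
      rw [← Nat.card_eq_fintype_card, hcard]
      calc 5 < p ^ 2 := by nlinarith
        _ ≤ p ^ n := Nat.pow_le_pow_right (by omega) hn
    obtain ⟨a, b, ha, hb, h⟩ := exists_quadChar_eq_one h2 h3 hK
    exact ⟨a, b, ha, hb, (nabla_eq_two hF h2 h3 (mul_ne_zero ha hb) h).symm⟩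
  · rintro k ⟨a, b, ha, hb, rfl⟩
    have hab := mul_ne_zero ha hb
    rcases quadChar_trichotomy (-(a ^ 2 + b ^ 2) / 3) with h | h | h
    · simp [nabla_eq_zero hF h3 hab h]
    · have h0 : a ^ 2 + b ^ 2 = 0 := by
        rw [div_eq_zero_iff, or_iff_left h3] at h
        exact neg_eq_zero.mp h
      simp [nabla_eq_one hF h2 h3 hab h0]
    · exact (nabla_eq_two hF h2 h3 hab h).le
end

section
/- Let n be an odd positive integer, d = (3^n − 1)/2 + 2, and F(X) = X^d on F_{3^n}. Then for all a, b ∈ F_{3^n}: if ab = 0 then ∇_F(a,b) = 3^n; if ab ≠ 0 then ∇_F(a,b) = 1 when (η(ab) = 1 and η(a²+b²) = 1) or (η(ab) = −1 and η(a²+b²) = 1), and ∇_F(a,b) = 3 when (η(ab) = −1 and η(a²+b²) = −1) or (η(ab) = 1 and η(a²+b²) = −1). In particular, F is second-order zero differential 3-uniform. -/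
/-!
On `𝔽_q`, `q = 3 ^ n`, the power map is `F X = η(X) X²`, where `η(X) = X ^ ((q - 1) / 2)` is the
quadratic character. As `n` is odd, `η(-1) = -1`, so `F` is odd.

In characteristic three, substitute `X = Y + (a + b)` and put `s = a + b`, `t = a - b`. The equation
becomes `F(Y+s) + F(Y-s) = F(Y+t) + F(Y-t)`, with `s² ≠ t²` exactly when `ab ≠ 0`. Clearly `Y = 0` is
a solution. For `Y ≠ 0`, going through the possible values of `η` at `Y ± s` and `Y ± t` shows that
the equation is equivalent to `Y² = s² + t² = -(a² + b²)` (`symm_eq_iff`). This quadratic is what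
the pattern `η(Y+s) = η(Y-s) = -η(Y+t) = -η(Y-t)` yields. The mixed patterns, where `η` agrees at
`Y ± s` and differs at `Y ± t` or vice versa, are excluded in `mixed_signs_false`; the remaining ones
contradict `s² ≠ t²`, and the case that some `Y ± s` or `Y ± t` vanishes is `eq_of_add_eq`. Conversely, if
`Y² = s² + t²`, then `Y² - s²` and `Y² - t²` are squares and `(Y+s)(Y+t) = -(Y+s+t)²`, which forces
the only sign pattern compatible with the equation.

Hence the number of solutions is `1` if `-(a² + b²)` is a nonsquare and `3` if it is a square, and
`a² + b² ≠ 0` because `-1` is a nonsquare.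
-/

open scoped Classical

section Algebra

variable {K : Type*} [Field K]

/-- If `η` takes the same value `c` at `Y ± s` but different values at `Y ± τ`, the equation
`Y² + Yτ + s² = 0` is impossible: with `w = Y - τ` and `k = τ + s` one has `k (Y - s) = w (Y + s)`
and `(Y + τ) k = (k - w)²`, and these give contradictory values of `η k`. -/
lemma mixed_signs_false (h3 : (3 : K) = 0) (e : K →* K) (he : ∀ x, x ≠ 0 → e x = 1 ∨ e x = -1)
    {Y s τ c : K} (hc : c = 1 ∨ c = -1) (h1 : e (Y + s) = c) (h2 : e (Y - s) = c)
    (h4 : e (Y - τ) = -c) (h5 : e (Y + τ) = c) (hk : τ + s ≠ 0) (hY : Y + τ ≠ 0)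
    (h : Y ^ 2 + Y * τ + s ^ 2 = 0) : False := by
  have i1 : (τ + s) * (Y - s) = (Y - τ) * (Y + s) := by linear_combination -h + Y * τ * h3
  have i2 : (Y + τ) * (τ + s) = (τ + s - (Y - τ)) ^ 2 := by
    linear_combination -h + (2 * Y * τ + Y * s - τ ^ 2 - τ * s) * h3
  have hne : τ + s - (Y - τ) ≠ 0 := by
    intro h0
    rw [h0] at i2
    exact mul_ne_zero hY hk (by simpa using i2)
  have j1 := congrArg e i1
  have j2 := congrArg e i2
  simp only [map_mul, map_pow, h1, h2, h4, h5] at j1 j2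
  rcases he _ hne with h6 | h6 <;> rcases hc with rfl | rfl <;> rw [h6] at j2 <;> grind

/-- The equation cannot hold when `η` agrees at `Y ± s` and differs at `Y ± t`. -/
lemma mixed_case_false (h3 : (3 : K) = 0) (e : K →* K) (he : ∀ x, x ≠ 0 → e x = 1 ∨ e x = -1)
    {Y s t c d : K} (hc : c = 1 ∨ c = -1) (hd : d = 1 ∨ d = -1)
    (h1 : e (Y + s) = c) (h2 : e (Y - s) = c) (h4 : e (Y + t) = d) (h5 : e (Y - t) = -d)
    (hm : s - t ≠ 0) (hp : s + t ≠ 0) (hYp : Y + t ≠ 0) (hYm : Y - t ≠ 0)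
    (h : c * (Y + s) ^ 2 + c * (Y - s) ^ 2 = d * (Y + t) ^ 2 + -d * (Y - t) ^ 2) : False := by
  by_cases hcd : d = c
  · subst hcd
    refine mixed_signs_false h3 e he (τ := t) hc h1 h2 h5 h4 (by rwa [add_comm]) hYp ?_
    rcases hc with rfl | rfl <;> grind
  · have hdc : d = -c := by
      rcases hc with rfl | rfl <;> rcases hd with rfl | rfl <;> simp_all
    subst hdc
    refine mixed_signs_false h3 e he (τ := -t) hc h1 h2 (by simpa using h4)
      (by simpa [← sub_eq_add_neg] using h5) (by grind) (by grind) ?_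
    rcases hc with rfl | rfl <;> grind

/-- The degenerate case where one of `Y ± s`, `Y ± t` vanishes. -/
lemma eq_of_add_eq (h3 : (3 : K) = 0) (e : K →* K) (he : ∀ x, x ≠ 0 → e x = 1 ∨ e x = -1)
    {x y z : K} (hx : x ≠ 0) (hy : y ≠ 0) (hz : z ≠ 0) (hxyz : x = y + z)
    (h : e x * x ^ 2 = e y * y ^ 2 + e z * z ^ 2) : y = z := by
  subst hxyz
  -- Opposite signs at `x` and at both of `y`, `z` give `(y - z)² = 0`;
  -- each of the other patterns forces one of `x`, `y`, `z` to vanish.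
  have key : (y - z) ^ 2 * (y * z * (y + z)) = 0 := by
    rcases he _ hx with h1 | h1 <;> rcases he _ hy with h2 | h2 <;> rcases he _ hz with h4 | h4 <;>
      rw [h1, h2, h4] at h <;> grind
  have : (y - z) ^ 2 = 0 := by
    rcases mul_eq_zero.mp key with h | h
    · exact h
    · exact absurd h (mul_ne_zero (mul_ne_zero hy hz) hx)
  exact sub_eq_zero.mp (pow_eq_zero_iff two_ne_zero |>.mp this)

/-- The nonzero solutions `Y` of the symmetrized equation are the square roots of `s² + t²`. -/
lemma symm_eq_iff (h3 : (3 : K) = 0) (e : K →* K) (he : ∀ x, x ≠ 0 → e x = 1 ∨ e x = -1)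
    (hneg : e (-1) = -1) {Y s t : K} (hY : Y ≠ 0) (hm : s - t ≠ 0) (hp : s + t ≠ 0) :
    e (Y + s) * (Y + s) ^ 2 + e (Y - s) * (Y - s) ^ 2
      = e (Y + t) * (Y + t) ^ 2 + e (Y - t) * (Y - t) ^ 2 ↔ Y ^ 2 = s ^ 2 + t ^ 2 := by
  have hen : ∀ x, e (-x) = -e x := by
    intro x
    rw [← neg_one_mul, map_mul, hneg, neg_one_mul]
  have hsq : ∀ x, x ≠ 0 → e (x ^ 2) = 1 := by
    intro x hx
    rw [map_pow]
    rcases he x hx with h | h <;> rw [h] <;> ring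
  have h2ne : (2 : K) ≠ 0 := fun h2 => one_ne_zero (α := K) (by linear_combination h3 - h2)
  constructor
  · intro h
    by_cases z1 : Y + s = 0
    · have := eq_of_add_eq h3 e he (x := Y - s) (y := Y + t) (z := Y - t)
        (by grind) (by grind) (by grind) (by grind) (by rw [← h, z1]; ring)
      grind
    by_cases z2 : Y - s = 0
    · have := eq_of_add_eq h3 e he (x := Y + s) (y := Y + t) (z := Y - t)
        (by grind) (by grind) (by grind) (by grind) (by rw [← h, z2]; ring)
      grind
    by_cases z4 : Y + t = 0
    · have := eq_of_add_eq h3 e he (x := Y - t) (y := Y + s) (z := Y - s)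
        (by grind) (by grind) (by grind) (by grind) (by rw [h, z4]; ring)
      grind
    by_cases z5 : Y - t = 0
    · have := eq_of_add_eq h3 e he (x := Y + t) (y := Y + s) (z := Y - s)
        (by grind) (by grind) (by grind) (by grind) (by rw [h, z5]; ring)
      grind
    have hm' : t - s ≠ 0 := by grind
    have hp' : t + s ≠ 0 := by grind
    by_cases a1 : e (Y - s) = e (Y + s)
    · by_cases a2 : e (Y - t) = e (Y + t)
      · rw [a1, a2] at h
        rcases he _ z1 with c | c <;> rcases he _ z4 with d | d <;> rw [c, d] at h <;> grind
      · have a3 : e (Y - t) = -e (Y + t) := by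
          rcases he _ z4 with c | c <;> rcases he _ z5 with d | d <;> grind
        rw [a1, a3] at h
        exact (mixed_case_false h3 e he (he _ z1) (he _ z4) rfl a1 rfl a3 hm hp z4 z5 h).elim
    · have a3 : e (Y - s) = -e (Y + s) := by
        rcases he _ z1 with c | c <;> rcases he _ z2 with d | d <;> grind
      by_cases a2 : e (Y - t) = e (Y + t)
      · rw [a2, a3] at h
        exact (mixed_case_false h3 e he (he _ z4) (he _ z1) rfl a2 rfl a3 hm' hp' z1 z2
          h.symm).elim
      · have a4 : e (Y - t) = -e (Y + t) := by
          rcases he _ z4 with c | c <;> rcases he _ z5 with d | d <;> grind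
        rw [a3, a4] at h
        -- here the equation reads `± Y s = ± Y t`
        exfalso
        have key : Y * (s - t) * (s + t) = 0 := by
          rcases he _ z1 with c | c <;> rcases he _ z4 with d | d <;> rw [c, d] at h <;> grind
        exact mul_ne_zero (mul_ne_zero hY hm) hp key
  · intro h
    by_cases hs : s = 0
    · subst hs
      have : Y = t ∨ Y = -t := sq_eq_sq_iff_eq_or_eq_neg.mp (by simpa using h)
      have d : ∀ x : K, x + x = -x := fun x => by linear_combination x * h3
      rcases this with rfl | rfl
      · rw [d, hen, add_zero, sub_zero, sub_self]
        linear_combination e Y * Y ^ 2 * h3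
      · have : -t - t = t := by linear_combination -t * h3
        rw [this]
        simp only [add_zero, sub_zero, hen]
        linear_combination -e t * t ^ 2 * h3
    by_cases ht : t = 0
    · subst ht
      have : Y = s ∨ Y = -s := sq_eq_sq_iff_eq_or_eq_neg.mp (by simpa using h)
      have d : ∀ x : K, x + x = -x := fun x => by linear_combination x * h3
      rcases this with rfl | rfl
      · rw [d, hen, add_zero, sub_zero, sub_self]
        linear_combination -e Y * Y ^ 2 * h3
      · have : -s - s = s := by linear_combination -s * h3
        rw [this]
        simp only [add_zero, sub_zero, hen]
        linear_combination e s * s ^ 2 * h3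
    have q1 : (Y + s) * (Y - s) = t ^ 2 := by linear_combination h
    have q2 : (Y + t) * (Y - t) = s ^ 2 := by linear_combination h
    have q3 : (Y + s) * (Y + t) = -(Y + s + t) ^ 2 := by
      linear_combination -h + (Y ^ 2 + Y * s + Y * t + s * t) * h3
    have z1 : (Y + s) * (Y - s) ≠ 0 := by rw [q1]; exact pow_ne_zero _ ht
    have z2 : (Y + t) * (Y - t) ≠ 0 := by rw [q2]; exact pow_ne_zero _ hs
    have z3 : Y + s + t ≠ 0 := by
      intro h0
      rw [h0] at q3
      exact mul_ne_zero (left_ne_zero_of_mul z1) (left_ne_zero_of_mul z2) (by simpa using q3)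
    have r1 := congrArg e q1
    have r2 := congrArg e q2
    have r3 := congrArg e q3
    rw [map_mul, hsq _ ht] at r1
    rw [map_mul, hsq _ hs] at r2
    rw [map_mul, hen, hsq _ z3] at r3
    rcases he _ (left_ne_zero_of_mul z1) with c | c
    · have d : e (Y + t) = -1 := by grind
      have c' : e (Y - s) = 1 := by grind
      have d' : e (Y - t) = -1 := by grind
      rw [c, d, c', d']
      linear_combination 4 * h + 2 * (s ^ 2 + t ^ 2) * h3
    · have d : e (Y + t) = 1 := by grind
      have c' : e (Y - s) = -1 := by grind
      have d' : e (Y - t) = 1 := by grind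
      rw [c, d, c', d']
      linear_combination -4 * h - 2 * (s ^ 2 + t ^ 2) * h3

/-- For `ab ≠ 0`, the solution set, recentred at `a + b`, is `0` and the square roots of
`-(a² + b²)`. -/
lemma second_diff_eq_zero_iff_s6 (h3 : (3 : K) = 0) (e : K →* K)
    (he : ∀ x, x ≠ 0 → e x = 1 ∨ e x = -1) (hneg : e (-1) = -1) (F : K → K)
    (hF : ∀ X, F X = e X * X ^ 2) {a b : K} (ha : a ≠ 0) (hb : b ≠ 0) (Y : K) :
    F (Y + (a + b) + a + b) - F (Y + (a + b) + b) - F (Y + (a + b) + a) + F (Y + (a + b)) = 0 ↔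
      Y = 0 ∨ Y ^ 2 = -(a ^ 2 + b ^ 2) := by
  have hen : ∀ x, e (-x) = -e x := by
    intro x
    rw [← neg_one_mul, map_mul, hneg, neg_one_mul]
  have x1 : Y + (a + b) + a + b = Y - (a + b) := by linear_combination (a + b) * h3
  have x2 : Y + (a + b) + b = Y + (a - b) := by linear_combination b * h3
  have x3 : Y + (a + b) + a = Y - (a - b) := by linear_combination a * h3
  rw [x1, x2, x3]
  simp only [hF]
  by_cases hY : Y = 0
  · subst hY
    simp only [zero_add, zero_sub, hen, true_or, iff_true]
    ring
  · have key := symm_eq_iff h3 e he hneg (s := a + b) (t := a - b) hY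
      (by grind) (by grind)
    have hr : (a + b) ^ 2 + (a - b) ^ 2 = -(a ^ 2 + b ^ 2) := by
      linear_combination (a ^ 2 + b ^ 2) * h3
    rw [hr] at key
    simp only [hY, false_or]
    rw [← key]
    constructor <;> intro h <;> linear_combination h

end Algebra

/-- The number of solutions for `ab ≠ 0`, for a finite field of characteristic three in which `-1`
is a nonsquare. -/
lemma nabla_eq {K : Type*} [Field K] [Finite K] (h3 : (3 : K) = 0) (e : K →* K)
    (he : ∀ x, x ≠ 0 → e x = 1 ∨ e x = -1) (hneg : e (-1) = -1)
    (hsq : ∀ x, x ≠ 0 → (IsSquare x ↔ e x = 1)) (F : K → K)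
    (hF : ∀ X, F X = e X * X ^ 2) {a b : K} (ha : a ≠ 0) (hb : b ≠ 0) :
    a ^ 2 + b ^ 2 ≠ 0 ∧ nabla F a b = if IsSquare (a ^ 2 + b ^ 2) then 1 else 3 := by
  have h2ne : (2 : K) ≠ 0 := fun h2 => one_ne_zero (α := K) (by linear_combination h3 - h2)
  have hen : ∀ x, e (-x) = -e x := by
    intro x
    rw [← neg_one_mul, map_mul, hneg, neg_one_mul]
  have hne : a ^ 2 + b ^ 2 ≠ 0 := by
    intro h
    have h1 : a ^ 2 = -b ^ 2 := by linear_combination h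
    have h4 := congrArg e h1
    rw [hen, (hsq _ (pow_ne_zero 2 ha)).mp (IsSquare.sq a),
      (hsq _ (pow_ne_zero 2 hb)).mp (IsSquare.sq b)] at h4
    grind
  refine ⟨hne, ?_⟩
  have hset : {X : K | F (X + a + b) - F (X + b) - F (X + a) + F X = 0}
      = (fun Y => Y + (a + b)) '' {Y : K | Y = 0 ∨ Y ^ 2 = -(a ^ 2 + b ^ 2)} := by
    ext X
    have := second_diff_eq_zero_iff_s6 h3 e he hneg F hF ha hb (X - (a + b))
    rw [sub_add_cancel] at this
    rw [Set.mem_ofPred_eq, this]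
    constructor
    · intro h
      exact ⟨_, h, by simp⟩
    · rintro ⟨Y, h, rfl⟩
      simpa using h
  rw [nabla, hset, Nat.card_image_of_injective (add_left_injective _), Nat.card_coe_set_eq]
  split_ifs with hsquare
  · have : {Y : K | Y = 0 ∨ Y ^ 2 = -(a ^ 2 + b ^ 2)} = {0} := by
      ext Y
      simp only [Set.mem_ofPred_eq, Set.mem_singleton_iff, or_iff_left_iff_imp]
      intro hY
      by_contra hY0
      have h4 := congrArg e hY
      rw [hen, (hsq _ hne).mp hsquare, (hsq _ (pow_ne_zero 2 hY0)).mp (IsSquare.sq Y)] at h4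
      grind
    rw [this, Set.ncard_singleton]
  · have h1 : IsSquare (-(a ^ 2 + b ^ 2)) := by
      rw [hsq _ (neg_ne_zero.mpr hne), hen]
      rw [hsq _ hne] at hsquare
      rcases he _ hne with h | h
      · exact absurd h hsquare
      · rw [h, neg_neg]
    obtain ⟨r, hr⟩ := h1
    have hr0 : r ≠ 0 := by
      rintro rfl
      exact hne (by linear_combination -hr)
    have : {Y : K | Y = 0 ∨ Y ^ 2 = -(a ^ 2 + b ^ 2)} = {0, r, -r} := by
      ext Y
      simp only [Set.mem_ofPred_eq, Set.mem_insert_iff, Set.mem_singleton_iff, hr, ← sq,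
        sq_eq_sq_iff_eq_or_eq_neg]
    rw [this, Set.ncard_eq_three]
    exact ⟨0, r, -r, hr0.symm, by simpa [eq_comm] using hr0, by grind, rfl⟩

theorem nabla_pow_half_add_two_char_three (n : ℕ) (hn : Odd n) (hn0 : 0 < n)
    (F : GaloisField 3 n → GaloisField 3 n)
    (hF : ∀ X, F X = X ^ ((3 ^ n - 1) / 2 + 2)) :
    (∀ a b : GaloisField 3 n,
      (a * b = 0 → nabla F a b = 3 ^ n) ∧
      (a * b ≠ 0 →
        (((quadChar (a * b) = 1 ∧ quadChar (a ^ 2 + b ^ 2) = 1) ∨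
            (quadChar (a * b) = -1 ∧ quadChar (a ^ 2 + b ^ 2) = 1)) →
          nabla F a b = 1) ∧
        (((quadChar (a * b) = -1 ∧ quadChar (a ^ 2 + b ^ 2) = -1) ∨
            (quadChar (a * b) = 1 ∧ quadChar (a ^ 2 + b ^ 2) = -1)) →
          nabla F a b = 3))) ∧
    IsGreatest {k : ℕ | ∃ a b : GaloisField 3 n, a ≠ 0 ∧ b ≠ 0 ∧ k = nabla F a b} 3 := by
  have : Fintype (GaloisField 3 n) := Fintype.ofFinite _
  have hcardN : Nat.card (GaloisField 3 n) = 3 ^ n := GaloisField.card 3 n hn0.ne'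
  have hcard : Fintype.card (GaloisField 3 n) = 3 ^ n := by
    rw [← Nat.card_eq_fintype_card, hcardN]
  have h3 : (3 : GaloisField 3 n) = 0 := by
    exact_mod_cast CharP.cast_eq_zero (GaloisField 3 n) 3
  have hchar : ringChar (GaloisField 3 n) ≠ 2 := by
    rw [ringChar.eq (GaloisField 3 n) 3]
    norm_num
  have hmod : 3 ^ n % 4 = 3 := by
    obtain ⟨k, rfl⟩ := hn
    have : 9 ^ k % 4 = 1 := by simp [Nat.pow_mod]
    rw [pow_succ, pow_mul]
    norm_num
    lia
  have hhalf : (3 ^ n - 1) / 2 = Fintype.card (GaloisField 3 n) / 2 := by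
    rw [hcard]
    lia
  let e : GaloisField 3 n →* GaloisField 3 n := powMonoidHom ((3 ^ n - 1) / 2)
  have hee : ∀ x, e x = x ^ (Fintype.card (GaloisField 3 n) / 2) := by
    intro x
    rw [← hhalf]
    rfl
  have he : ∀ x, x ≠ 0 → e x = 1 ∨ e x = -1 := by
    intro x hx
    rw [hee]
    exact FiniteField.pow_dichotomy hchar hx
  have hneg : e (-1) = -1 := by
    rw [hee, Odd.neg_one_pow]
    rw [hcard, Nat.odd_iff]
    lia
  have hsq : ∀ x, x ≠ 0 → (IsSquare x ↔ e x = 1) := by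
    intro x hx
    rw [hee]
    exact FiniteField.isSquare_iff hchar hx
  have hFe : ∀ X, F X = e X * X ^ 2 := by
    intro X
    rw [hF, pow_add]
    rfl
  have main : ∀ a b : GaloisField 3 n, a ≠ 0 → b ≠ 0 → a ^ 2 + b ^ 2 ≠ 0 ∧
      nabla F a b = if IsSquare (a ^ 2 + b ^ 2) then 1 else 3 :=
    fun a b ha hb => by convert nabla_eq h3 e he hneg hsq F hFe ha hb
  refine ⟨fun a b => ⟨fun hab => ?_, fun hab => ?_⟩, ?_, ?_⟩
  · have : {X | F (X + a + b) - F (X + b) - F (X + a) + F X = 0} = Set.univ := by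
      ext X
      rcases mul_eq_zero.mp hab with rfl | rfl <;> simp
    rw [nabla, this, Nat.card_univ, hcardN]
  · obtain ⟨hne, hval⟩ := main a b (left_ne_zero_of_mul hab) (right_ne_zero_of_mul hab)
    have hq : quadChar (a ^ 2 + b ^ 2) = if IsSquare (a ^ 2 + b ^ 2) then 1 else -1 := by
      rw [quadChar, if_neg hne]
      congr
    rw [hval, hq]
    split_ifs <;> simp
  · refine ⟨1, 1, one_ne_zero, one_ne_zero, ?_⟩
    rw [(main 1 1 one_ne_zero one_ne_zero).2, if_neg]
    -- `1 + 1 = -1` is a nonsquare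
    have h2 : (1 : GaloisField 3 n) ^ 2 + 1 ^ 2 = -1 := by linear_combination h3
    rw [h2, hsq _ (by simp), hneg]
    exact Ring.neg_one_ne_one_of_char_ne_two hchar
  · rintro k ⟨a, b, ha, hb, rfl⟩
    rw [(main a b ha hb).2]
    split_ifs <;> norm_num
end

section
/- Let n and t be positive integers with 1 ≤ t ≤ n, and let F(X) = X^{2^t − 1} on F_{2^n}. For b ∈ F_{2^n} \ {0,1} set B = (b^{2^t} + b)/(b(b+1)). Then: ∇_F(1,b) = 2^n if b ∈ {0,1}; ∇_F(1,b) = δ_F(B) if b ∉ {0,1} and B = 1; and ∇_F(1,b) = max(δ_F(B) − 2, 0) if b ∉ {0,1} and B ≠ 1. -/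
/-!
Write `q = 2 ^ t`, `d = q - 1` and `D X = (X + 1) ^ d + X ^ d`. Since `X * X ^ d = X ^ q` and
`X ↦ X ^ q` is additive, `D X * (X * (X + 1)) = X ^ q + X` for every `X`
(`derivPow_mul`); in particular `D b = B` for `b ∉ {0, 1}`. The FBCT condition at `(1, b)` reads
`D (X + b) = D X`. Both `X ^ q + X` and `X * (X + 1)` are additive in `X`, so the condition is
equivalent to `D X = B` whenever `X ∉ {b, b + 1}` (`derivPow_shift_iff`). The points `b` and `b + 1`
always solve `D X = B`, while the FBCT condition there says `1 = B`, because `D 0 = D 1 = 1`.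
Hence the two solution sets agree if `B = 1`, and otherwise the FBCT set is the DDT set with the
two points `b, b + 1` removed.
-/

open scoped Classical

/-- The DDT entry `δ_F(c)` of the power map `X ↦ X^d` in characteristic 2:
the number of `X` with `(X+1)^d + X^d = c`. -/
noncomputable def deltaPow {K : Type*} [Field K] (d : ℕ) (c : K) : ℕ :=
  Nat.card {X : K | (X + 1) ^ d + X ^ d = c}

section

variable {K : Type*} [Field K]

/-- The derivative in direction `1` of `X ↦ X ^ (2 ^ t - 1)`, with `+` in place of `-` as in
characteristic 2. -/
def derivPow (t : ℕ) (X : K) : K := (X + 1) ^ (2 ^ t - 1) + X ^ (2 ^ t - 1)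

theorem derivPow_zero {t : ℕ} (ht : 1 ≤ t) : derivPow t (0 : K) = 1 := by
  have h : 2 ^ t - 1 ≠ 0 := by
    have := Nat.one_lt_two_pow (n := t) (by omega)
    omega
  simp [derivPow, h]

variable [CharP K 2]

theorem derivPow_add_one (t : ℕ) (X : K) : derivPow t (X + 1) = derivPow t X := by
  have h : X + 1 + 1 = X := by rw [add_assoc, CharTwo.add_self_eq_zero, add_zero]
  rw [derivPow, derivPow, h, add_comm]

theorem derivPow_mul (t : ℕ) (X : K) :
    derivPow t X * (X * (X + 1)) = X ^ 2 ^ t + X := by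
  have hq (Y : K) : Y ^ (2 ^ t - 1) * Y = Y ^ 2 ^ t :=
    pow_sub_one_mul (by positivity) Y
  have h1 := hq (X + 1)
  have h2 := hq X
  rw [add_pow_char_pow, one_pow] at h1
  have h3 := CharTwo.add_self_eq_zero (X ^ 2 ^ t * X)
  rw [derivPow]
  linear_combination X * h1 + (X + 1) * h2 + h3

theorem mul_add_one_ne_zero {X : K} (h0 : X ≠ 0) (h1 : X ≠ 1) : X * (X + 1) ≠ 0 :=
  mul_ne_zero h0 fun h => h1 (CharTwo.add_eq_zero.mp h)

theorem derivPow_shift_iff (t : ℕ) {X b : K} (hb0 : b ≠ 0) (hb1 : b ≠ 1)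
    (h0 : X ≠ b) (h1 : X ≠ b + 1) :
    derivPow t (X + b) = derivPow t X ↔ derivPow t X = derivPow t b := by
  have hY0 : X + b ≠ 0 := fun h => h0 (CharTwo.add_eq_zero.mp h)
  have hY1 : X + b ≠ 1 := fun h => h1 (by linear_combination h - CharTwo.add_self_eq_zero b)
  have hX := derivPow_mul t X
  have hb := derivPow_mul t b
  have hY := derivPow_mul t (X + b)
  rw [add_pow_char_pow] at hY
  have h2 := CharTwo.add_self_eq_zero (X * b)
  constructor
  · intro h
    rw [h] at hY
    apply mul_right_cancel₀ (mul_add_one_ne_zero hb0 hb1)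
    linear_combination hY - hX - hb - derivPow t X * h2
  · intro h
    rw [h] at hX ⊢
    apply mul_right_cancel₀ (mul_add_one_ne_zero hY0 hY1)
    linear_combination hY - hX - hb - derivPow t b * h2

/-- At the exceptional points `X ∈ {b, b + 1}`, the FBCT condition says that the derivative
takes the value `1` at `b`. -/
theorem derivPow_shift_iff_of_exceptional {t : ℕ} (ht : 1 ≤ t) {X b : K}
    (hX : X = b ∨ X = b + 1) :
    derivPow t (X + b) = derivPow t X ↔ derivPow t b = 1 := by
  rcases hX with rfl | rfl
  · rw [CharTwo.add_self_eq_zero, derivPow_zero ht, eq_comm]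
  · rw [add_right_comm, derivPow_add_one, derivPow_add_one, CharTwo.add_self_eq_zero,
      derivPow_zero ht, eq_comm]

theorem derivPow_shift_iff_of_eq_one {t : ℕ} (ht : 1 ≤ t) {b : K} (hb0 : b ≠ 0) (hb1 : b ≠ 1)
    (hB : derivPow t b = 1) (X : K) :
    derivPow t (X + b) = derivPow t X ↔ derivPow t X = derivPow t b := by
  by_cases hX : X = b ∨ X = b + 1
  · rw [derivPow_shift_iff_of_exceptional ht hX]
    rcases hX with rfl | rfl <;> simp [hB, derivPow_add_one]
  · push Not at hX
    exact derivPow_shift_iff t hb0 hb1 hX.1 hX.2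

theorem derivPow_shift_iff_of_ne_one {t : ℕ} (ht : 1 ≤ t) {b : K} (hb0 : b ≠ 0) (hb1 : b ≠ 1)
    (hB : derivPow t b ≠ 1) (X : K) :
    derivPow t (X + b) = derivPow t X ↔
      derivPow t X = derivPow t b ∧ ¬ (X = b ∨ X = b + 1) := by
  by_cases hX : X = b ∨ X = b + 1
  · simp [derivPow_shift_iff_of_exceptional ht hX, hB, hX]
  · simp only [hX, not_false_eq_true, and_true]
    push Not at hX
    exact derivPow_shift_iff t hb0 hb1 hX.1 hX.2

theorem FBCT_set_eq (t : ℕ) {F : K → K} (hF : ∀ X, F X = X ^ (2 ^ t - 1)) (b : K) :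
    {X : K | F (X + 1 + b) + F (X + b) + F (X + 1) + F X = 0} =
      {X : K | derivPow t (X + b) = derivPow t X} := by
  ext X
  simp only [Set.mem_ofPred_eq, hF, derivPow]
  rw [add_assoc _ _ (X ^ _), CharTwo.add_eq_zero, add_right_comm X 1 b]

end

theorem FBCT_pow_two_pow_t_sub_one (n t : ℕ) (ht1 : 1 ≤ t) (htn : t ≤ n)
    (F : GaloisField 2 n → GaloisField 2 n)
    (hF : ∀ X, F X = X ^ (2 ^ t - 1)) :
    ∀ b : GaloisField 2 n,
      ((b = 0 ∨ b = 1) → FBCT F 1 b = 2 ^ n) ∧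
      (b ≠ 0 → b ≠ 1 →
        ((b ^ 2 ^ t + b) / (b * (b + 1)) = 1 →
          FBCT F 1 b = deltaPow (2 ^ t - 1) ((b ^ 2 ^ t + b) / (b * (b + 1)))) ∧
        ((b ^ 2 ^ t + b) / (b * (b + 1)) ≠ 1 →
          FBCT F 1 b = deltaPow (2 ^ t - 1) ((b ^ 2 ^ t + b) / (b * (b + 1))) - 2)) := by
  intro b
  have hset := FBCT_set_eq t hF b
  refine ⟨fun hb => ?_, fun hb0 hb1 => ?_⟩
  · have huniv : {X : GaloisField 2 n | derivPow t (X + b) = derivPow t X} = Set.univ := by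
      ext X
      rcases hb with rfl | rfl <;> simp [derivPow_add_one]
    rw [FBCT, hset, huniv, Nat.card_univ, GaloisField.card 2 n (by omega)]
  · have hB : (b ^ 2 ^ t + b) / (b * (b + 1)) = derivPow t b := by
      rw [← derivPow_mul, mul_div_cancel_right₀ _ (mul_add_one_ne_zero hb0 hb1)]
    rw [hB, FBCT, hset]
    refine ⟨fun h1 => ?_, fun h1 => ?_⟩
    · simp only [derivPow_shift_iff_of_eq_one ht1 hb0 hb1 h1]
      rfl
    · have hdiff : {X : GaloisField 2 n | derivPow t (X + b) = derivPow t X} =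
          {X | derivPow t X = derivPow t b} \ {b, b + 1} := by
        ext X
        exact derivPow_shift_iff_of_ne_one ht1 hb0 hb1 h1 X
      have hsub : ({b, b + 1} : Set (GaloisField 2 n)) ⊆
          {X | derivPow t X = derivPow t b} := by
        rintro X (rfl | rfl)
        · rfl
        · exact derivPow_add_one t b
      have hcard : ({b, b + 1} : Set (GaloisField 2 n)).ncard = 2 :=
        Set.ncard_pair (by simp)
      rw [hdiff, Nat.card_coe_set_eq, Set.ncard_sdiff hsub (Set.toFinite _), hcard]
      rfl
end

section
/- Let n and t be positive integers with 1 ≤ t ≤ n, and let F(X) = X^{2^t − 1} on F_{2^n}. Then for b ∈ F_{2^n} \ {0,1}: if b^{2^t − 2} = 1 then ∇_F(1,b) = 2^{gcd(t−1,n)}, and if b^{2^t − 1} = 1 then ∇_F(1,b) = 2^{gcd(t,n)} − 4. -/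
/-!
Put `Q = 2 ^ t` and let `S` be the sum of `Y ^ (Q - 1)` over the four points
`Y ∈ {X, X + 1, X + b, X + 1 + b}`. Since `Y * Y ^ (Q - 1) = Y ^ Q` and `Y ↦ Y ^ Q` is additive,
multiplying `S` by the product of the four points gives
`(b² + b) X ^ Q + (b + b ^ Q) X² + (b² + b ^ Q) X` (`prod_mul_sum`).

* If `b ^ Q = b²`, this is `(b² + b)(X ^ Q + X²)`. The set `{X | X ^ Q = X²}` is an additive group
  containing `1` and `b`, and `Y ^ (Q - 1) = Y` on it, so it is exactly the solution set of `S = 0`.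
  As squaring is injective, it equals `{X | X ^ 2 ^ (t - 1) = X}`.
* If `b ^ Q = b`, this is `(b² + b)(X ^ Q + X)`. Here `Y ^ (Q - 1) = 1` for nonzero `Y = Y ^ Q`, so
  at `X ∈ {0, 1, b, b + 1}` the sum is `1 + 1 + 1 ≠ 0`, and the solution set is
  `{X | X ^ Q = X}` with these four points removed.

The fixed points of `X ↦ X ^ 2 ^ k` are counted through the cyclic group of units, using
`gcd (2 ^ n - 1, 2 ^ k - 1) = 2 ^ gcd (n, k) - 1` (`ncard_pow_two_pow_eq_self`).
-/

open scoped Classical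

/-- The case `k = 0`, where every element is counted, is included. -/
theorem ncard_pow_two_pow_eq_self {n : ℕ} (hn : n ≠ 0) (k : ℕ) :
    {X : GaloisField 2 n | X ^ 2 ^ k = X}.ncard = 2 ^ Nat.gcd k n := by
  have hset : {X : GaloisField 2 n | X ^ 2 ^ k = X} =
      insert 0 (Units.val '' ((powMonoidHom (2 ^ k - 1) :
        (GaloisField 2 n)ˣ →* (GaloisField 2 n)ˣ).ker : Set (GaloisField 2 n)ˣ)) := by
    have hk : 2 ^ k = (2 ^ k - 1) + 1 := (Nat.sub_add_cancel Nat.one_le_two_pow).symm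
    ext X
    simp only [Set.mem_ofPred_eq, Set.mem_insert_iff, Set.mem_image, SetLike.mem_coe,
      MonoidHom.mem_ker, powMonoidHom_apply]
    constructor
    · intro h
      by_cases hX : X = 0
      · exact Or.inl hX
      · refine Or.inr ⟨Units.mk0 X hX, ?_, rfl⟩
        ext
        rw [hk, pow_succ] at h
        simpa using mul_right_cancel₀ hX (h.trans (one_mul X).symm)
    · rintro (rfl | ⟨u, hu, rfl⟩)
      · exact zero_pow (by positivity)
      · rw [hk, ← Units.val_pow_eq_pow_val, pow_succ, hu, one_mul]
  have hunits : Nat.card (GaloisField 2 n)ˣ = 2 ^ n - 1 := by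
    rw [Nat.card_units, GaloisField.card 2 n hn]
  rw [hset, Set.ncard_insert_of_notMem (by simp), Set.ncard_image_of_injective _ Units.val_injective]
  change Nat.card (powMonoidHom (2 ^ k - 1) :
    (GaloisField 2 n)ˣ →* (GaloisField 2 n)ˣ).ker + 1 = _
  rw [IsCyclic.card_powMonoidHom_ker, hunits, Nat.pow_sub_one_gcd_pow_sub_one, Nat.gcd_comm,
    Nat.sub_add_cancel Nat.one_le_two_pow]

section CharTwo

variable {K : Type*} [Field K] [CharP K 2]

/-- The defining sum of `FBCT (· ^ (2 ^ t - 1)) 1 b`, multiplied by the product of its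
four base points, becomes a linearized polynomial in `X`. -/
theorem prod_mul_sum (t : ℕ) (X b : K) :
    X * (X + 1) * (X + b) * (X + 1 + b) *
      ((X + 1 + b) ^ (2 ^ t - 1) + (X + b) ^ (2 ^ t - 1) + (X + 1) ^ (2 ^ t - 1)
        + X ^ (2 ^ t - 1)) =
      (b ^ 2 + b) * X ^ 2 ^ t + (b + b ^ 2 ^ t) * X ^ 2 + (b ^ 2 + b ^ 2 ^ t) * X := by
  have hmul : ∀ Y : K, Y * Y ^ (2 ^ t - 1) = Y ^ 2 ^ t := fun Y =>
    mul_pow_sub_one (by positivity) Y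
  have hadd : ∀ Y Z : K, (Y + Z) ^ 2 ^ t = Y ^ 2 ^ t + Z ^ 2 ^ t := fun Y Z =>
    add_pow_char_pow Y Z 2 t
  have h0 := hmul X
  have h1 := hmul (X + 1)
  have h2 := hmul (X + b)
  have h3 := hmul (X + 1 + b)
  simp only [hadd, one_pow] at h1 h2 h3
  have two : (2 : K) = 0 := CharTwo.two_eq_zero
  generalize X ^ (2 ^ t - 1) = f0 at *
  generalize (X + 1) ^ (2 ^ t - 1) = f1 at *
  generalize (X + b) ^ (2 ^ t - 1) = f2 at *
  generalize (X + 1 + b) ^ (2 ^ t - 1) = f3 at *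
  generalize X ^ 2 ^ t = x at *
  generalize b ^ 2 ^ t = c at *
  clear hmul hadd
  grind

end CharTwo

theorem FBCT_pow_two_pow_t_sub_one_special (n t : ℕ) (ht1 : 1 ≤ t) (htn : t ≤ n)
    (F : GaloisField 2 n → GaloisField 2 n)
    (hF : ∀ X, F X = X ^ (2 ^ t - 1)) :
    ∀ b : GaloisField 2 n, b ≠ 0 → b ≠ 1 →
      (b ^ (2 ^ t - 2) = 1 → FBCT F 1 b = 2 ^ Nat.gcd (t - 1) n) ∧
      (b ^ (2 ^ t - 1) = 1 → FBCT F 1 b = 2 ^ Nat.gcd t n - 4) := by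
  intro b hb0 hb1
  have hn : n ≠ 0 := by omega
  have two : (2 : GaloisField 2 n) = 0 := CharTwo.two_eq_zero
  have hadd : ∀ Y Z : GaloisField 2 n, (Y + Z) ^ 2 ^ t = Y ^ 2 ^ t + Z ^ 2 ^ t := fun Y Z =>
    add_pow_char_pow Y Z 2 t
  have hmul : ∀ Y : GaloisField 2 n, Y * Y ^ (2 ^ t - 1) = Y ^ 2 ^ t := fun Y =>
    mul_pow_sub_one (by positivity) Y
  have h2t : 2 ≤ 2 ^ t := Nat.le_self_pow (by omega) 2
  have hzero : (0 : GaloisField 2 n) ^ (2 ^ t - 1) = 0 := zero_pow (by omega)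
  have hb1' : b + 1 ≠ 0 := fun h => hb1 (by linear_combination h - two)
  have hc : b ^ 2 + b ≠ 0 := by
    have : b ^ 2 + b = b * (b + 1) := by ring
    rw [this]
    exact mul_ne_zero hb0 hb1'
  have hpts : ∀ X : GaloisField 2 n, X * (X + 1) * (X + b) * (X + 1 + b) = 0 ↔
      X = 0 ∨ X = 1 ∨ X = b ∨ X = b + 1 := by
    intro X
    have e1 : X + 1 = 0 ↔ X = 1 := by grind
    have e2 : X + b = 0 ↔ X = b := by grind
    have e3 : X + 1 + b = 0 ↔ X = b + 1 := by grind
    simp only [mul_eq_zero, e1, e2, e3, or_assoc]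
  constructor
  · intro hb
    have hbQ : b ^ 2 ^ t = b ^ 2 := by
      rw [← Nat.sub_add_cancel h2t, pow_add, hb, one_mul]
    have hself : ∀ Y : GaloisField 2 n, Y ^ 2 ^ t = Y ^ 2 → Y ^ (2 ^ t - 1) = Y := by
      intro Y hY
      by_cases h : Y = 0
      · rw [h, hzero]
      · exact mul_left_cancel₀ h (by rw [hmul, hY, sq])
    rw [← ncard_pow_two_pow_eq_self hn]
    change Set.ncard _ = _
    congr 1
    ext X
    simp only [Set.mem_ofPred_eq, hF]
    have hroot : X ^ 2 ^ (t - 1) = X ↔ X ^ 2 ^ t = X ^ 2 := by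
      have : X ^ 2 ^ t = (X ^ 2 ^ (t - 1)) ^ 2 := by
        rw [← pow_mul, ← pow_succ, Nat.sub_add_cancel ht1]
      rw [this, CharTwo.sq_inj]
    rw [hroot]
    constructor
    · intro h
      have key := prod_mul_sum t X b
      rw [h, mul_zero, hbQ] at key
      have : (b ^ 2 + b) * (X ^ 2 ^ t - X ^ 2) = 0 := by
        linear_combination -key - (b ^ 2 + b) * X ^ 2 * two - b ^ 2 * X * two
      exact sub_eq_zero.1 ((mul_eq_zero.1 this).resolve_left hc)
    · intro h
      rw [hself X h, hself (X + 1) (by rw [hadd, h, one_pow]; linear_combination -X * two),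
        hself (X + b) (by rw [hadd, h, hbQ]; linear_combination -X * b * two),
        hself (X + 1 + b) (by
          rw [hadd, hadd, h, hbQ, one_pow]
          linear_combination -(X + b + X * b) * two)]
      linear_combination (2 * X + 1 + b) * two
  · intro hb
    have hbQ : b ^ 2 ^ t = b := by rw [← hmul, hb, mul_one]
    have hone : ∀ Y : GaloisField 2 n, Y ≠ 0 → Y ^ 2 ^ t = Y → Y ^ (2 ^ t - 1) = 1 := by
      intro Y h hY
      exact mul_left_cancel₀ h (by rw [hmul, hY, mul_one])
    have hb1Q : (b + 1) ^ (2 ^ t - 1) = 1 :=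
      hone _ hb1' (by rw [hadd, hbQ, one_pow])
    have hset : {X | F (X + 1 + b) + F (X + b) + F (X + 1) + F X = 0} =
        {X : GaloisField 2 n | X ^ 2 ^ t = X} \ {0, 1, b, b + 1} := by
      ext X
      simp only [Set.mem_ofPred_eq, Set.mem_sdiff, Set.mem_insert_iff, Set.mem_singleton_iff, hF]
      have key := prod_mul_sum t X b
      rw [hbQ] at key
      have key' : X * (X + 1) * (X + b) * (X + 1 + b) *
          ((X + 1 + b) ^ (2 ^ t - 1) + (X + b) ^ (2 ^ t - 1) + (X + 1) ^ (2 ^ t - 1)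
            + X ^ (2 ^ t - 1)) = (b ^ 2 + b) * (X ^ 2 ^ t - X) := by
        linear_combination key + (b * X ^ 2 + (b ^ 2 + b) * X) * two
      constructor
      · intro h
        rw [h, mul_zero, eq_comm] at key'
        refine ⟨sub_eq_zero.1 ((mul_eq_zero.1 key').resolve_left hc), fun hX => ?_⟩
        -- The points `Y` are `0, 1, b, b + 1` in some order, so the sum is `0 + 1 + 1 + 1 = 1`.
        have t1 : (1 : GaloisField 2 n) + 1 = 0 := by linear_combination two
        have t2 : b + b = 0 := by linear_combination b * two
        have t3 : b + 1 + b = 1 := by linear_combination b * two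
        have t4 : b + 1 + 1 = b := by linear_combination two
        rcases hX with rfl | rfl | rfl | rfl
        · simp [hzero, hb, add_comm 1 b, hb1Q, t1] at h
        · simp [hzero, hb, add_comm 1 b, hb1Q, t1] at h
        · simp [hzero, hb, t2, t3, hb1Q, t1] at h
        · simp [hzero, hb, t2, t3, t4, hb1Q, t1] at h
      · rintro ⟨h, hX⟩
        rw [h, sub_self, mul_zero] at key'
        exact (mul_eq_zero.1 key').resolve_left (fun h' => hX ((hpts X).1 h'))
    rw [← ncard_pow_two_pow_eq_self hn]
    change Set.ncard _ = _
    have hsub : ({0, 1, b, b + 1} : Set (GaloisField 2 n)) ⊆ {X | X ^ 2 ^ t = X} := by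
      rintro X (rfl | rfl | rfl | rfl)
      · exact zero_pow (by positivity)
      · exact one_pow _
      · exact hbQ
      · change (_ : GaloisField 2 n) ^ _ = _
        rw [hadd, hbQ, one_pow]
    have hfour : ({0, 1, b, b + 1} : Set (GaloisField 2 n)).ncard = 4 := by
      rw [Set.ncard_insert_of_notMem, Set.ncard_insert_of_notMem, Set.ncard_pair]
      · simp
      · simp [hb0, Ne.symm hb1]
      · simp [Ne.symm hb0, Ne.symm hb1']
    rw [hset, Set.ncard_sdiff hsub, hfour]
end

section
/- Let n and t be positive integers with 1 ≤ t ≤ n, and let F(X) = X^{2^t − 1} on F_{2^n}. Then the F-boomerang uniformity of F is bounded by its differential uniformity: for all a, b ∈ F_{2^n} \ {0} with a ≠ b, FB_F(a,b) ≤ δ_F, where δ_F = max{ #{X ∈ F_{2^n} : F(X+a) + F(X) = b} : a ∈ F_{2^n} \ {0}, b ∈ F_{2^n} }. -/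
/-!
Write `Q = 2 ^ t`. The power map satisfies `F X * X = X ^ Q` for every `X`, zero included, and
`X ↦ X ^ Q` is additive. If `X` is counted by `FBCT F a b`, the second derivative of `F` in the
directions `a, b` vanishes at `X`; eliminating `F (X + b)` and `F (X + a + b)` by means of these
identities determines the first derivative:
`(F (X + a) + F X) * (b * (a + b)) = a ^ Q * b + a * b ^ Q`.
The right-hand side does not depend on `X`, so all the points counted by `FBCT F a b` lie in a
single fibre of `X ↦ F (X + a) + F X`, and such a fibre has at most `diffUnif F` elements.
-/

open scoped Classical

/-- The differential uniformity of `F` (in characteristic 2):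
`max { #{X : F(X+a) + F(X) = b} : a ≠ 0, b }`. -/
noncomputable def diffUnif {K : Type*} [Field K] (F : K → K) : ℕ :=
  sSup {k : ℕ | ∃ a b : K, a ≠ 0 ∧ k = Nat.card {X : K | F (X + a) + F X = b}}

/-- The supremum defining `diffUnif` is over a bounded set when the field is finite, so it
dominates each of its members. -/
lemma card_le_diffUnif {K : Type*} [Field K] [Finite K] (F : K → K) {a : K} (ha : a ≠ 0) (c : K) :
    Nat.card {X : K | F (X + a) + F X = c} ≤ diffUnif F := by
  refine le_csSup ⟨Nat.card K, ?_⟩ ⟨a, c, ha, rfl⟩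
  rintro k ⟨a, b, -, rfl⟩
  exact Finite.card_subtype_le _

/-- The elimination step: `p, q, r, s` stand for the values of `F` at `X`, `X + a`, `X + b`,
`X + a + b`, and `x, α, β` for the `2 ^ t`-th powers of `X, a, b`. -/
lemma derivative_eq_of_second_derivative_eq_zero {K : Type*} [Field K] [CharP K 2]
    {X a b x α β p q r s : K} (hp : p * X = x) (hq : q * (X + a) = x + α)
    (hr : r * (X + b) = x + β) (hs : s * (X + a + b) = x + α + β) (h : s + r + q + p = 0) :
    (q + p) * (b * (a + b)) = α * b + a * β := by
  have h2 : (2 : K) = 0 := CharTwo.two_eq_zero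
  -- The sum of the four defining relations, in which all multiples of `X` cancel.
  have hlin : r * a + p * (a + b) + q * b = 0 := by
    linear_combination (X + a + b) * h - hs - hp - hq - hr - (2 * x + α + β) * h2
  -- Multiplying by `X + b` turns the values `p, q, r` back into the known products.
  linear_combination (X + b) * hlin - a * hr - (a + b) * hp - b * hq
    + (q * a * b - α * b - a * β - (a + b) * x) * h2

theorem FBCT_le_diffUnif_pow_two_pow_t_sub_one (n t : ℕ) (ht1 : 1 ≤ t) (htn : t ≤ n)
    (F : GaloisField 2 n → GaloisField 2 n)
    (hF : ∀ X, F X = X ^ (2 ^ t - 1)) :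
    ∀ a b : GaloisField 2 n, a ≠ 0 → b ≠ 0 → a ≠ b → FBCT F a b ≤ diffUnif F := by
  intro a b ha hb hab
  have hab' : a + b ≠ 0 := fun h => hab (CharTwo.add_eq_zero.mp h)
  have hmul : ∀ X, F X * X = X ^ 2 ^ t := fun X => by
    rw [hF, pow_sub_one_mul (by positivity)]
  have hadd : ∀ X Y : GaloisField 2 n, (X + Y) ^ 2 ^ t = X ^ 2 ^ t + Y ^ 2 ^ t :=
    fun X Y => add_pow_char_pow X Y 2 t
  refine le_trans ?_ (card_le_diffUnif F ha ((a ^ 2 ^ t * b + a * b ^ 2 ^ t) / (b * (a + b))))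
  refine Nat.card_mono (Set.toFinite _) fun X hX => ?_
  rw [Set.mem_setOf_eq] at hX ⊢
  rw [eq_div_iff (mul_ne_zero hb hab')]
  refine derivative_eq_of_second_derivative_eq_zero (hmul X) ?_ ?_ ?_ hX
  · rw [hmul, hadd]
  · rw [hmul, hadd]
  · rw [hmul, hadd, hadd]
end

section
/- Let m be an odd positive integer, n = 2m, and F₁(X) = X^{2^m − 1} on F_{2^n}. Then for b ∈ F_{2^n}: ∇_{F₁}(1,b) = 2^n if b = 0 or b = 1; ∇_{F₁}(1,b) = 4 if b ∉ {0,1} and b^{2^m − 2} = 1; ∇_{F₁}(1,b) = 2^m − 4 if b ∉ {0,1} and b^{2^m − 1} = 1; and ∇_{F₁}(1,b) = 0 otherwise. -/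
/-!
Write `q = 2 ^ m` and `φ X = X ^ q`, an involutive ring endomorphism of the field with `q ^ 2`
elements. Then `F X = φ X / X` for every `X`, including `X = 0` because `0 / 0 = 0`.

Fix `b ∉ {0, 1}`. Away from the four points `0, 1, b, b + 1`, clearing denominators turns the
defining equation into `(φ X + X) (b² + b) = (φ b + b) (X² + X)`
(`second_diff_eq_zero_iff_generic`).
* If `φ b = b`, this says `φ X = X`, and `φ` has `q` fixed points (`ncard_pow_eq_self`), of which
  the four exceptional points have to be removed.
* If `φ b ≠ b`, put `c = (φ X + X) / (φ b + b)`, which is fixed by `φ`. From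
  `X² + X = c (b² + b)`, adding the conjugate equation gives `c² = c`, so `X² + X ∈ {0, b² + b}`
  and `X` is one of the exceptional points (`exceptional_of_cross_eq`): no generic solutions.

At the exceptional points all four values of `F` are those at `0, 1, b, b + 1`, so the equation is
the same at each of them; it holds if and only if `φ b = b²` (`second_diff_exceptional_iff`).
-/

open scoped Classical

section SecondDifference

variable {K : Type*} [Field K] [CharP K 2] (φ : K →+* K)

/-- For `X` outside `{0, 1, b, b + 1}` no denominator vanishes and the equation can be cleared. -/
lemma second_diff_eq_zero_iff_generic {b X : K} (h0 : X ≠ 0) (h1 : X + 1 ≠ 0) (hb : X + b ≠ 0)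
    (hb1 : X + 1 + b ≠ 0) :
    φ (X + 1 + b) / (X + 1 + b) + φ (X + b) / (X + b) + φ (X + 1) / (X + 1) + φ X / X = 0 ↔
      (φ X + X) * (b ^ 2 + b) = (φ b + b) * (X ^ 2 + X) := by
  have two : (2 : K) = 0 := CharTwo.two_eq_zero
  simp only [map_add, map_one]
  rw [← sub_eq_zero (a := (φ X + X) * (b ^ 2 + b))]
  have : (φ X + 1 + φ b) / (X + 1 + b) + (φ X + φ b) / (X + b) + (φ X + 1) / (X + 1) + φ X / X
      = ((φ X + X) * (b ^ 2 + b) - (φ b + b) * (X ^ 2 + X)) /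
        ((X + 1 + b) * (X + b) * (X + 1) * X) := by
    field_simp
    grind
  rw [this, div_eq_zero_iff]
  have : (X + 1 + b) * (X + b) * (X + 1) * X ≠ 0 := by positivity
  tauto

/-- When `b` is not fixed by the involution `φ`, the cleared equation has only the exceptional
solutions. -/
lemma exceptional_of_cross_eq (hφ : ∀ x, φ (φ x) = x) {b X : K} (hb : φ b ≠ b)
    (h : (φ X + X) * (b ^ 2 + b) = (φ b + b) * (X ^ 2 + X)) :
    X = 0 ∨ X + 1 = 0 ∨ X + b = 0 ∨ X + 1 + b = 0 := by
  have two : (2 : K) = 0 := CharTwo.two_eq_zero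
  have ht : φ b + b ≠ 0 := fun h' => hb (by grind)
  have h' := congrArg φ h
  simp only [map_add, map_mul, map_pow, hφ] at h'
  -- With `T = φ X + X` and `t = φ b + b`, the sum of `h` and its conjugate is `t T (T + t) = 0`.
  have hT : (φ b + b) * ((φ X + X) * (φ X + X + (φ b + b))) = 0 := by
    grind
  rcases mul_eq_zero.1 ((mul_eq_zero.1 hT).resolve_left ht) with hT | hT
  · have : (φ b + b) * (X * (X + 1)) = 0 := by grind
    rcases mul_eq_zero.1 ((mul_eq_zero.1 this).resolve_left ht) with h | h <;> tauto
  · have : (φ b + b) * ((X + b) * (X + 1 + b)) = 0 := by grind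
    rcases mul_eq_zero.1 ((mul_eq_zero.1 this).resolve_left ht) with h | h <;> tauto

/-- At each exceptional point the equation reads `F (1 + b) + F b + F 1 + F 0 = 0`. -/
lemma second_diff_exceptional_iff {b X : K} (hb0 : b ≠ 0) (hb1 : b ≠ 1)
    (hX : X = 0 ∨ X + 1 = 0 ∨ X + b = 0 ∨ X + 1 + b = 0) :
    φ (X + 1 + b) / (X + 1 + b) + φ (X + b) / (X + b) + φ (X + 1) / (X + 1) + φ X / X = 0 ↔
      φ b = b ^ 2 := by
  have two : (2 : K) = 0 := CharTwo.two_eq_zero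
  have hb1' : 1 + b ≠ 0 := fun h => hb1 (by grind)
  have base : φ (1 + b) / (1 + b) + φ b / b + 1 = 0 ↔ φ b = b ^ 2 := by
    rw [map_add, map_one]
    have : (1 + φ b) / (1 + b) + φ b / b + 1 = (φ b - b ^ 2) / ((1 + b) * b) := by
      field_simp
      grind
    rw [this, div_eq_zero_iff, sub_eq_zero]
    have : (1 + b) * b ≠ 0 := mul_ne_zero hb1' hb0
    tauto
  rw [← base]
  rcases hX with rfl | h | h | h
  · simp
  · obtain rfl : X = 1 := by grind
    have e1 : (1 : K) + 1 = 0 := by grind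
    simp only [e1, zero_add, map_zero, div_zero, map_one, div_one, add_zero]
    rw [add_comm (φ b / b)]
  · obtain rfl : X = b := by grind
    have e1 : X + 1 + X = 1 := by grind
    have e2 : X + X = 0 := by grind
    simp only [e1, e2, map_zero, div_zero, map_one, div_one, add_zero]
    rw [add_comm X 1, show ∀ u v : K, 1 + u + v = u + v + 1 by intros; ring]
  · obtain rfl : X = 1 + b := by grind
    have e1 : 1 + b + 1 = b := by grind
    have e2 : b + b = 0 := by grind
    have e3 : 1 + b + b = 1 := by grind
    simp only [e1, e2, e3, map_zero, div_zero, map_one, div_one, zero_add]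
    rw [show ∀ u v : K, 1 + u + v = v + u + 1 by intros; ring]

/-- The points `0, 1, b, b + 1` are distinct when `b ∉ {0, 1}`. -/
lemma ncard_exceptional {b : K} (hb0 : b ≠ 0) (hb1 : b ≠ 1) :
    {X : K | X = 0 ∨ X + 1 = 0 ∨ X + b = 0 ∨ X + 1 + b = 0}.ncard = 4 := by
  have two : (2 : K) = 0 := CharTwo.two_eq_zero
  have : {X : K | X = 0 ∨ X + 1 = 0 ∨ X + b = 0 ∨ X + 1 + b = 0} =
      (({0, 1, b, 1 + b} : Finset K) : Set K) := by
    ext X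
    simp only [Set.mem_ofPred_eq, Finset.coe_insert, Finset.coe_singleton, Set.mem_insert_iff,
      Set.mem_singleton_iff]
    grind
  rw [this, Set.ncard_coe_finset]
  have h1 : b + 1 ≠ 0 := fun h => hb1 (by grind)
  have h2 : (1 : K) ≠ 0 := one_ne_zero
  rw [Finset.card_insert_of_notMem, Finset.card_insert_of_notMem, Finset.card_insert_of_notMem,
    Finset.card_singleton]
  all_goals
    simp only [Finset.mem_insert, Finset.mem_singleton]
    grind

end SecondDifference

/-- In a field with `q ^ 2` elements, `x ↦ x ^ q` has exactly `q` fixed points: `0` and the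
`(q - 1)`-torsion of the cyclic unit group. -/
lemma ncard_pow_eq_self {K : Type*} [Field K] [Finite K] {q : ℕ} (hq : 0 < q)
    (hK : Nat.card K = q ^ 2) : {x : K | x ^ q = x}.ncard = q := by
  have : {x : K | x ^ q = x} =
      insert 0 (Units.val '' ((powMonoidHom (q - 1) : Kˣ →* Kˣ).ker : Set Kˣ)) := by
    ext x
    obtain ⟨k, rfl⟩ : ∃ k, q = k + 1 := ⟨q - 1, by omega⟩
    simp only [Set.mem_ofPred_eq, Set.mem_insert_iff, Set.mem_image, SetLike.mem_coe,
      MonoidHom.mem_ker, powMonoidHom_apply, Nat.add_sub_cancel]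
    constructor
    · intro h
      by_cases hx : x = 0
      · exact Or.inl hx
      · refine Or.inr ⟨Units.mk0 x hx, ?_, rfl⟩
        ext
        rw [pow_succ] at h
        simpa using mul_right_cancel₀ hx (h.trans (one_mul x).symm)
    · rintro (rfl | ⟨u, hu, rfl⟩)
      · simp
      · rw [← Units.val_pow_eq_pow_val, pow_succ, hu, one_mul]
  rw [this, Set.ncard_insert_of_notMem (by simp), Set.ncard_image_of_injective _ Units.val_injective,
    ← Nat.card_coe_set_eq]
  have h := IsCyclic.card_powMonoidHom_ker (G := Kˣ) (q - 1)
  have hu : Nat.card Kˣ = (q - 1) * (q + 1) := by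
    rw [Nat.card_units, hK]
    obtain ⟨k, rfl⟩ : ∃ k, q = k + 1 := ⟨q - 1, by omega⟩
    rw [Nat.add_sub_cancel, Nat.sub_eq_iff_eq_add (Nat.one_le_pow _ _ (by omega))]
    ring
  rw [hu] at h
  have e : Nat.card ((powMonoidHom (q - 1) : Kˣ →* Kˣ).ker : Set Kˣ) = q - 1 := by
    refine Eq.trans h ?_
    simp
  rw [e]
  omega

theorem FBCT_pow_two_pow_m_sub_one_odd_m (m : ℕ) (hm : Odd m) (hm0 : 0 < m)
    (F : GaloisField 2 (2 * m) → GaloisField 2 (2 * m))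
    (hF : ∀ X, F X = X ^ (2 ^ m - 1)) :
    ∀ b : GaloisField 2 (2 * m),
      ((b = 0 ∨ b = 1) → FBCT F 1 b = 2 ^ (2 * m)) ∧
      (¬(b = 0 ∨ b = 1) → b ^ (2 ^ m - 2) = 1 → FBCT F 1 b = 4) ∧
      (¬(b = 0 ∨ b = 1) → b ^ (2 ^ m - 1) = 1 → FBCT F 1 b = 2 ^ m - 4) ∧
      (¬(b = 0 ∨ b = 1) → b ^ (2 ^ m - 2) ≠ 1 → b ^ (2 ^ m - 1) ≠ 1 →
        FBCT F 1 b = 0) := by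
  intro b
  have hK : Nat.card (GaloisField 2 (2 * m)) = 2 ^ (2 * m) := GaloisField.card 2 _ (by omega)
  have two : (2 : GaloisField 2 (2 * m)) = 0 := CharTwo.two_eq_zero
  let φ : GaloisField 2 (2 * m) →+* GaloisField 2 (2 * m) := iterateFrobenius _ 2 m
  have hφ : ∀ x, φ x = x ^ 2 ^ m := fun x => iterateFrobenius_def 2 m x
  have hφφ : ∀ x, φ (φ x) = x := by
    intro x
    have := Fintype.ofFinite (GaloisField 2 (2 * m))
    rw [hφ, hφ, ← pow_mul, ← pow_add, ← two_mul, ← hK, Nat.card_eq_fintype_card]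
    exact FiniteField.pow_card x
  have hq : 2 ≤ 2 ^ m := Nat.le_self_pow hm0.ne' 2
  obtain ⟨k, hk⟩ : ∃ k, 2 ^ m = k + 2 := ⟨2 ^ m - 2, by omega⟩
  have hF' : ∀ X, F X = φ X / X := by
    intro X
    rw [hF, hφ, hk]
    rcases eq_or_ne X 0 with rfl | hX
    · simp
    · rw [eq_div_iff hX, ← pow_succ]
      rfl
  have hcard : FBCT F 1 b = {X | φ (X + 1 + b) / (X + 1 + b) + φ (X + b) / (X + b) +
      φ (X + 1) / (X + 1) + φ X / X = 0}.ncard := by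
    simp only [FBCT, hF', Nat.card_coe_set_eq]
  -- `E` is the set of exceptional points `0, 1, b, b + 1`.
  set E : Set (GaloisField 2 (2 * m)) :=
    {X | X = 0 ∨ X + 1 = 0 ∨ X + b = 0 ∨ X + 1 + b = 0} with hE
  have generic : ∀ X, X ∉ E → (φ (X + 1 + b) / (X + 1 + b) + φ (X + b) / (X + b) +
      φ (X + 1) / (X + 1) + φ X / X = 0 ↔
      (φ X + X) * (b ^ 2 + b) = (φ b + b) * (X ^ 2 + X)) := by
    intro X hX
    simp only [hE, Set.mem_ofPred_eq, not_or] at hX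
    exact second_diff_eq_zero_iff_generic φ hX.1 hX.2.1 hX.2.2.1 hX.2.2.2
  refine ⟨?_, ?_, ?_, ?_⟩
  · intro hb
    rw [hcard, ← hK, ← Set.ncard_univ]
    congr 1
    ext X
    simp only [Set.mem_ofPred_eq, Set.mem_univ, iff_true]
    rcases hb with rfl | rfl
    · simp only [add_zero]
      grind
    · rw [show X + 1 + 1 = X by grind]
      grind
  · intro hb hpow
    obtain ⟨hb0, hb1⟩ := not_or.1 hb
    have hb2 : φ b = b ^ 2 := by
      rw [hk, Nat.add_sub_cancel] at hpow
      rw [hφ, hk, pow_add, hpow, one_mul]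
    have hbφ : φ b ≠ b := by
      rw [hb2]
      intro h
      exact hb1 (mul_right_cancel₀ hb0 (by rw [← sq, h, one_mul]))
    rw [hcard, ← ncard_exceptional hb0 hb1, ← hE]
    congr 1
    ext X
    constructor
    · intro h
      by_contra hX
      exact hX (exceptional_of_cross_eq φ hφφ hbφ ((generic X hX).1 h))
    · intro h
      exact (second_diff_exceptional_iff φ hb0 hb1 h).2 hb2
  · intro hb hpow
    obtain ⟨hb0, hb1⟩ := not_or.1 hb
    have hbφ : φ b = b := by
      have : 2 ^ m = (2 ^ m - 1) + 1 := by omega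
      rw [hφ, this, pow_succ, hpow, one_mul]
    have hb2 : φ b ≠ b ^ 2 := by
      rw [hbφ]
      intro h
      exact hb1 (mul_right_cancel₀ hb0 (by rw [← sq, ← h, one_mul]))
    have hfix : {X | φ X = X}.ncard = 2 ^ m := by
      simp only [hφ]
      exact ncard_pow_eq_self (by omega) (by rw [hK, mul_comm, pow_mul])
    have hsub : E ⊆ {X | φ X = X} := by
      intro X hX
      have : X = 0 ∨ X = 1 ∨ X = b ∨ X = 1 + b := by
        simpa only [hE, Set.mem_ofPred_eq, add_assoc, CharTwo.add_eq_zero] using hX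
      rcases this with rfl | rfl | rfl | rfl <;> simp [hbφ]
    rw [hcard, ← hfix, ← ncard_exceptional hb0 hb1, ← hE, ← Set.ncard_sdiff hsub]
    congr 1
    ext X
    simp only [Set.mem_sdiff, Set.mem_ofPred_eq]
    have hd : b ^ 2 + b ≠ 0 := by
      intro h
      have : b * (b + 1) = 0 := by grind
      rcases mul_eq_zero.1 this with h | h
      · exact hb0 h
      · exact hb1 (by grind)
    by_cases hX : X ∈ E
    · simp only [hX, not_true_eq_false, and_false, iff_false]
      exact fun h => hb2 ((second_diff_exceptional_iff φ hb0 hb1 hX).1 h)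
    · rw [generic X hX, hbφ, CharTwo.add_self_eq_zero, zero_mul, mul_eq_zero, or_iff_left hd,
        CharTwo.add_eq_zero]
      exact (and_iff_left hX).symm
  · intro hb hpow2 hpow1
    obtain ⟨hb0, hb1⟩ := not_or.1 hb
    have hb2 : φ b ≠ b ^ 2 := by
      intro h
      apply hpow2
      rw [hφ, hk, pow_add] at h
      rw [hk, Nat.add_sub_cancel]
      exact mul_right_cancel₀ (pow_ne_zero 2 hb0) (h.trans (one_mul _).symm)
    have hbφ : φ b ≠ b := by
      intro h
      apply hpow1
      have e : 2 ^ m = (2 ^ m - 1) + 1 := by omega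
      rw [hφ, e, pow_succ] at h
      exact mul_right_cancel₀ hb0 (h.trans (one_mul _).symm)
    rw [hcard, Set.ncard_eq_zero, Set.eq_empty_iff_forall_notMem]
    intro X h
    by_cases hX : X ∈ E
    · exact hb2 ((second_diff_exceptional_iff φ hb0 hb1 hX).1 h)
    · exact hX (exceptional_of_cross_eq φ hφφ hbφ ((generic X hX).1 h))
end

section
/- Let m be an even positive integer, n = 2m, and F₁(X) = X^{2^m − 1} on F_{2^n}. Then for b ∈ F_{2^n}: ∇_{F₁}(1,b) = 2^n if b = 0 or b = 1; ∇_{F₁}(1,b) = 2^m − 4 if b ∉ {0,1} and b^{2^m − 1} = 1; and ∇_{F₁}(1,b) = 0 otherwise. -/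
/-!
Write `q = 2 ^ m` and let `σ X = X ^ q`, an involutive automorphism of `𝔽_{q²}` with fixed field
`𝔽_q`. Then `X ^ (q - 1) = σ X / X` for all `X`, including `X = 0` with the convention `0 / 0 = 0`,
so the defining equation at `(1, b)` becomes a rational equation in `X` and `σ X`.

* For `b ∈ 𝔽_q \ {0, 1}`, every `X ∈ 𝔽_q` outside `{0, 1, b, b + 1}` is a solution (four ones),
  the four exceptional points are not (three ones), and for `X ∉ 𝔽_q`, putting `t = X + σ X ≠ 0`,
  the equation becomes `t * (1 / (X ^ 2 + X) + 1 / ((X + b) ^ 2 + (X + b))) = 0`, forcing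
  `b ^ 2 + b = 0`. This is `quot_sum_fixed`; together with `|𝔽_q| = q` it gives `q - 4`.
* For `b ∉ 𝔽_q`, an exceptional point is a solution only if `σ b = b ^ 2`, so `b ^ 4 = σ (σ b) = b`
  and `b ∈ 𝔽_4 ⊆ 𝔽_q` because `m` is even. At any other point the equation reads
  `(X + σ X) * (b ^ 2 + b) = (b + σ b) * (X ^ 2 + X)`; adding its conjugate gives
  `X + σ X = b + σ b`, hence `X ^ 2 + X = b ^ 2 + b`, and so `X ∈ {b, b + 1}`, which is excluded.
  This is `quot_sum_nonfixed`.
-/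

open scoped Classical

/-- The case `b ∈ 𝔽_q`, where `σ` is the conjugation and `σ X / X` stands for `X ^ (q - 1)`. -/
lemma quot_sum_fixed {K : Type*} [Field K] [CharP K 2] (σ : K →+* K) {b : K}
    (hb0 : b ≠ 0) (hb1 : b ≠ 1) (hb : σ b = b) (X : K) :
    σ (X + 1 + b) / (X + 1 + b) + σ (X + b) / (X + b) + σ (X + 1) / (X + 1) + σ X / X = 0 ↔
      σ X = X ∧ X ≠ 0 ∧ X ≠ 1 ∧ X ≠ b ∧ X ≠ b + 1 := by
  have h2 : (2 : K) = 0 := CharTwo.two_eq_zero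
  have hb1' : 1 + b ≠ 0 := by grind
  simp only [map_add, map_one, hb]
  by_cases x0 : X = 0
  · subst x0
    simp [div_self hb0, div_self hb1']
    grind
  by_cases x1 : X = 1
  · subst x1
    have e : (1 : K) + 1 = 0 := by grind
    simp [div_self hb0, div_self hb1', e]
  by_cases x2 : X = b
  · subst x2
    have e : X + 1 + X = 1 := by grind
    have e' : X + X = 0 := by grind
    have e'' : X + 1 ≠ 0 := by grind
    simp [hb, e, e', div_self e'', div_self hb0]
    grind
  by_cases x3 : X = b + 1
  · subst x3
    have e' : b + 1 + b = 1 := by grind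
    have e'' : b + 1 + 1 = b := by grind
    have e3 : b + 1 ≠ 0 := by grind
    simp [hb, e', e'', div_self hb0, div_self e3]
    grind
  have n1 : X + 1 ≠ 0 := by grind
  have n2 : X + b ≠ 0 := by grind
  have n3 : X + 1 + b ≠ 0 := by grind
  simp only [x0, x1, x2, x3, ne_eq, not_false_eq_true, and_true]
  constructor
  · intro h
    field_simp at h
    have key : (σ X + X) * (b * (1 + b)) = 0 := by grind
    have := (mul_eq_zero.1 key).resolve_right (mul_ne_zero hb0 hb1')
    grind
  · intro h
    rw [h, div_self n1, div_self n2, div_self n3, div_self x0]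
    grind

/-- The case `b ∉ 𝔽_q`, where `σ` is the conjugation and `σ X / X` stands for `X ^ (q - 1)`.
The hypothesis `h4` says that `𝔽_4` is contained in the fixed field of `σ`. -/
lemma quot_sum_nonfixed {K : Type*} [Field K] [CharP K 2] (σ : K →+* K)
    (hσ : ∀ x, σ (σ x) = x) (h4 : ∀ x, x ^ 4 = x → σ x = x) {b : K} (hb : σ b ≠ b) (X : K) :
    σ (X + 1 + b) / (X + 1 + b) + σ (X + b) / (X + b) + σ (X + 1) / (X + 1) + σ X / X ≠ 0 := by
  have h2 : (2 : K) = 0 := CharTwo.two_eq_zero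
  have hb0 : b ≠ 0 := by rintro rfl; simp at hb
  have hb1 : b ≠ 1 := by rintro rfl; simp at hb
  have hb1' : 1 + b ≠ 0 := by grind
  have hb1'' : b + 1 ≠ 0 := by grind
  have hsq : σ b ≠ b ^ 2 := by
    intro h
    apply hb
    apply h4
    have h' := hσ b
    rw [h, map_pow, h] at h'
    rw [← h']
    ring_nf
    grind
  intro h
  simp only [map_add, map_one] at h
  by_cases x0 : X = 0
  · subst x0
    simp only [map_zero, zero_add, div_zero, add_zero, div_one] at h
    field_simp at h
    exact hsq (by grind)
  by_cases x1 : X = 1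
  · subst x1
    have e : (1 : K) + 1 = 0 := by grind
    simp only [map_one, e, zero_add, div_zero, add_zero, div_one] at h
    field_simp at h
    exact hsq (by grind)
  by_cases x2 : X = b
  · subst x2
    have e : X + 1 + X = 1 := by grind
    have e' : X + X = 0 := by grind
    have f : σ X + 1 + σ X = 1 := by grind
    simp only [e, e', f, div_zero, add_zero, div_one] at h
    field_simp at h
    exact hsq (by grind)
  by_cases x3 : X = b + 1
  · subst x3
    have e' : b + 1 + b = 1 := by grind
    have e'' : b + 1 + 1 = b := by grind
    have f' : σ b + 1 + σ b = 1 := by grind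
    have f'' : σ b + 1 + 1 = σ b := by grind
    simp only [map_add, map_one, e', e'', f', f'', div_one] at h
    field_simp at h
    exact hsq (by grind)
  have n1 : X + 1 ≠ 0 := by grind
  have n2 : X + b ≠ 0 := by grind
  have n3 : X + 1 + b ≠ 0 := by grind
  field_simp at h
  have key : (X + σ X) * (b ^ 2 + b) = (b + σ b) * (X ^ 2 + X) := by grind
  have key' := congrArg σ key
  simp only [map_mul, map_add, map_pow, hσ] at key'
  have s0 : b + σ b ≠ 0 := by grind
  have t0 : X + σ X ≠ 0 := by
    intro t
    rw [t, zero_mul] at key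
    rcases mul_eq_zero.1 key.symm with k | k
    · exact s0 k
    · have : X * (X + 1) = 0 := by linear_combination k
      rcases mul_eq_zero.1 this with k | k <;> contradiction
  have hts : (X + σ X) * (b + σ b) * ((X + σ X) + (b + σ b)) = 0 := by grind
  have ts : X + σ X = b + σ b := by
    have := (mul_eq_zero.1 hts).resolve_left (mul_ne_zero t0 s0)
    grind
  rw [ts] at key
  have k := mul_left_cancel₀ s0 key
  have : (X + b) * (X + 1 + b) = 0 := by grind
  rcases mul_eq_zero.1 this with k | k <;> contradiction

/-- `|𝔽_q| = q`: the fixed points are `0` and the kernel of `u ↦ u ^ (q - 1)` on the cyclic group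
of units, whose order `q ^ 2 - 1` is divisible by `q - 1`. -/
lemma ncard_pow_two_pow_eq_self_s11 (m : ℕ) (hm0 : 0 < m) :
    {X : GaloisField 2 (2 * m) | X ^ 2 ^ m = X}.ncard = 2 ^ m := by
  have hq : 1 < 2 ^ m := Nat.one_lt_two_pow hm0.ne'
  have hK : Nat.card (GaloisField 2 (2 * m)) = 2 ^ (2 * m) := GaloisField.card 2 _ (by omega)
  have hU : Nat.card (GaloisField 2 (2 * m))ˣ = 2 ^ (2 * m) - 1 := by
    rw [Nat.card_units, hK]
  have hker := IsCyclic.card_powMonoidHom_ker (G := (GaloisField 2 (2 * m))ˣ) (2 ^ m - 1)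
  rw [hU, Nat.gcd_eq_right (Nat.pow_sub_one_dvd_pow_sub_one 2 (Dvd.intro_left 2 rfl))] at hker
  have hset : {X : GaloisField 2 (2 * m) | X ^ 2 ^ m = X} =
      insert 0 (Units.val '' ((powMonoidHom (2 ^ m - 1) :
        (GaloisField 2 (2 * m))ˣ →* (GaloisField 2 (2 * m))ˣ).ker : Set _)) := by
    ext X
    simp only [Set.mem_ofPred_eq, Set.mem_insert_iff, Set.mem_image, SetLike.mem_coe,
      MonoidHom.mem_ker, powMonoidHom_apply]
    constructor
    · intro h
      by_cases x0 : X = 0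
      · exact Or.inl x0
      refine Or.inr ⟨Units.mk0 X x0, ?_, rfl⟩
      ext
      simp only [Units.val_pow_eq_pow_val, Units.val_mk0, Units.val_one]
      apply mul_right_cancel₀ x0
      rw [pow_sub_one_mul (by omega), h, one_mul]
    · rintro (rfl | ⟨u, hu, rfl⟩)
      · exact zero_pow (by omega)
      · rw [← pow_sub_one_mul (by omega), ← Units.val_pow_eq_pow_val, hu]
        simp
  rw [hset, Set.ncard_insert_of_notMem (by simp), Set.ncard_image_of_injective _ Units.val_injective]
  rw [← Nat.card_coe_set_eq]
  simp only [SetLike.coe_sort_coe, hker]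
  omega

theorem FBCT_pow_two_pow_m_sub_one_even_m (m : ℕ) (hm : Even m) (hm0 : 0 < m)
    (F : GaloisField 2 (2 * m) → GaloisField 2 (2 * m))
    (hF : ∀ X, F X = X ^ (2 ^ m - 1)) :
    ∀ b : GaloisField 2 (2 * m),
      ((b = 0 ∨ b = 1) → FBCT F 1 b = 2 ^ (2 * m)) ∧
      (¬(b = 0 ∨ b = 1) → b ^ (2 ^ m - 1) = 1 → FBCT F 1 b = 2 ^ m - 4) ∧
      (¬(b = 0 ∨ b = 1) → b ^ (2 ^ m - 1) ≠ 1 → FBCT F 1 b = 0) := by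
  intro b
  have h2 : (2 : GaloisField 2 (2 * m)) = 0 := CharTwo.two_eq_zero
  have hq : 1 < 2 ^ m := Nat.one_lt_two_pow hm0.ne'
  have hK : Nat.card (GaloisField 2 (2 * m)) = 2 ^ (2 * m) := GaloisField.card 2 _ (by omega)
  let σ := iterateFrobenius (GaloisField 2 (2 * m)) 2 m
  have hσdef : ∀ x, σ x = x ^ 2 ^ m := fun x => iterateFrobenius_def 2 m x
  have hFσ : ∀ X, F X = σ X / X := by
    intro X
    rw [hF, hσdef]
    by_cases x0 : X = 0
    · subst x0
      rw [div_zero, zero_pow (by omega)]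
    · rw [eq_div_iff x0, pow_sub_one_mul (by omega)]
  have hfix : b ≠ 0 → (b ^ (2 ^ m - 1) = 1 ↔ σ b = b) := by
    intro hb0
    rw [← hF, hFσ, div_eq_one_iff_eq hb0]
  refine ⟨?_, ?_, ?_⟩
  · intro hb
    have hset : {X | F (X + 1 + b) + F (X + b) + F (X + 1) + F X = 0} = Set.univ := by
      ext X
      simp only [Set.mem_ofPred_eq, Set.mem_univ, iff_true]
      rcases hb with rfl | rfl
      · simp only [add_zero]
        grind
      · have e : X + 1 + 1 = X := by grind
        rw [e]
        grind
    rw [FBCT, hset, Nat.card_univ, hK]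
  · intro hb h1
    push Not at hb
    have hs := (hfix hb.1).1 h1
    have hset : {X | F (X + 1 + b) + F (X + b) + F (X + 1) + F X = 0} =
        {X | X ^ 2 ^ m = X} \ {0, 1, b, b + 1} := by
      ext X
      simp only [Set.mem_ofPred_eq, hFσ]
      rw [quot_sum_fixed σ hb.1 hb.2 hs X, hσdef]
      simp
    have h4 : ({0, 1, b, b + 1} : Set (GaloisField 2 (2 * m))).ncard = 4 := by
      have hb1 : b + 1 ≠ 0 := by grind
      rw [Set.ncard_insert_of_notMem, Set.ncard_insert_of_notMem, Set.ncard_pair]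
      · simp
      · simp [hb.1, hb.2.symm]
      · simp [hb.1.symm, hb1.symm]
    change Set.ncard _ = _
    rw [hset, Set.ncard_sdiff ?_ (Set.toFinite _), ncard_pow_two_pow_eq_self_s11 m hm0, h4]
    intro x hx
    simp only [Set.mem_insert_iff, Set.mem_singleton_iff] at hx
    rw [Set.mem_ofPred_eq, ← hσdef]
    rcases hx with rfl | rfl | rfl | rfl <;> simp [hs]
  · intro hb h1
    push Not at hb
    have hs : σ b ≠ b := fun h => h1 ((hfix hb.1).2 h)
    have hinv : ∀ x, σ (σ x) = x := by
      intro x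
      have := Fintype.ofFinite (GaloisField 2 (2 * m))
      have hx := FiniteField.pow_card x
      rw [← Nat.card_eq_fintype_card, hK] at hx
      rw [hσdef, hσdef, ← pow_mul, ← pow_add, ← two_mul, hx]
    have h4 : ∀ x, x ^ 4 = x → σ x = x := by
      intro x hx
      obtain ⟨k, hk⟩ := hm
      have hpow : 2 ^ m = 4 ^ k := by rw [hk, ← two_mul, pow_mul]; norm_num
      rw [hσdef, hpow]
      clear * - hx
      induction k with
      | zero => simp
      | succ k ih => rw [pow_succ, pow_mul, ih, hx]
    have hset : {X | F (X + 1 + b) + F (X + b) + F (X + 1) + F X = 0} = ∅ := by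
      ext X
      simp only [Set.mem_ofPred_eq, hFσ, Set.mem_empty_iff_false, iff_false]
      exact quot_sum_nonfixed σ hinv h4 hs X
    rw [FBCT, hset]
    simp
end

section
/- Let m be a positive integer that is either even, or odd with m > 2; let n = 2m and F₁(X) = X^{2^m − 1} on F_{2^n}. Then the Feistel boomerang uniformity of F₁ equals 2^m − 4, i.e. max{ FB_{F₁}(a,b) : a, b ∈ F_{2^n} \ {0}, a ≠ b } = 2^m − 4. -/
/-!
Write `q = 2 ^ m` and `σ x = x ^ q`, an involutive automorphism of `𝔽_{q²}`; then `F x = σ x / x`,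
also at `x = 0` because `0 / 0 = 0`. Since `F` is multiplicative, `FBCT F a b = FBCT F 1 (b / a)`
(`FBCT_scale`), so only the entries `(1, b)` with `b ≠ 0, 1` matter.

For `x ∉ {0, 1, b, b + 1}`, clearing denominators turns the defining equation into
`(σ x + x) b (b + 1) = (σ b + b) x (x + 1)` (`boom_generic`).

* If `σ b = b`, this says `σ x = x`, while the four exceptional points give `1 ≠ 0`; the solutions
  are `𝔽_q \ {0, 1, b, b + 1}`, so the entry is `q - 4` (`card_fixed_case`).
* If `σ b ≠ b`, put `t = x + σ x`, so that `x² + x = k t` with `k = (b² + b) / (σ b + b)`. Adding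
  the conjugate equation gives `t² + t = (k + σ k) t`, so `t = 0` or `t = 1 + k + σ k = b + σ b`.
  In the first case `x ∈ {0, 1}`, in the second `x² + x = b² + b`, so `x ∈ {b, b + 1}`. Hence all
  solutions are exceptional points (`boom_nonfixed`), and these are solutions only if `σ b = b²`
  (`boom_exceptional`), which forces `b ∈ 𝔽₄ \ 𝔽₂` and `m` odd. The entry is thus `0` or at most
  `4`, the latter only for odd `m ≥ 3`, where `4 ≤ q - 4`.
-/

open scoped Classical

section Algebra

variable {K : Type*} [Field K] [CharP K 2] (σ : K →+* K)

/-- The sum defining the table entry at `(1, b)` for the function `x ↦ σ x / x`. -/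
def boomSum (b x : K) : K :=
  σ (x + 1 + b) / (x + 1 + b) + σ (x + b) / (x + b) + σ (x + 1) / (x + 1) + σ x / x

/-- Away from the four points where a denominator vanishes, clearing denominators leaves an
equation of degree one in `σ x`. -/
lemma boom_generic {b x : K} (h0 : x ≠ 0) (h1 : x + 1 ≠ 0) (hb : x + b ≠ 0)
    (hb1 : x + 1 + b ≠ 0) :
    boomSum σ b x = 0 ↔ (σ x + x) * (b * (b + 1)) = (σ b + b) * (x * (x + 1)) := by
  have h2 : (2 : K) = 0 := CharTwo.two_eq_zero
  have key : boomSum σ b x * (x * (x + 1) * (x + b) * (x + 1 + b))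
      = (σ x + x) * (b * (b + 1)) - (σ b + b) * (x * (x + 1)) := by
    unfold boomSum
    simp only [map_add, map_one]
    field_simp
    grind
  have hne : x * (x + 1) * (x + b) * (x + 1 + b) ≠ 0 := by simp [*]
  rw [← sub_eq_zero (a := (σ x + x) * _), ← key]
  simp [hne]

/-- The four exceptional points are solutions only if `σ b = b ^ 2`. -/
lemma boom_exceptional {b x : K} (hb0 : b ≠ 0) (hb1 : b ≠ 1)
    (hx : x = 0 ∨ x = 1 ∨ x = b ∨ x = b + 1) (h : boomSum σ b x = 0) : σ b = b ^ 2 := by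
  have h2 : (2 : K) = 0 := CharTwo.two_eq_zero
  have hb1' : b + 1 ≠ 0 := by
    intro h; apply hb1; grind
  have e : σ (b + 1) / (b + 1) + σ b / b + 1 = 0 := by
    unfold boomSum at h
    have e0 : ∀ y : K, y + y = 0 := CharTwo.add_self_eq_zero
    have r1 : (1 : K) + 1 + b = b := by grind
    have r2 : b + 1 + b = 1 := by grind
    have r3 : b + 1 + 1 = b := by grind
    have r4 : b + 1 + 1 + b = 0 := by grind
    rcases hx with rfl | rfl | rfl | rfl
    · simpa [add_comm, add_left_comm] using h
    · rw [r1, e0, add_comm 1 b] at h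
      simp only [map_zero, map_one, div_one, div_zero] at h
      linear_combination h
    · rw [r2, e0] at h
      simp only [map_zero, map_one, div_one, div_zero] at h
      linear_combination h
    · rw [r4, r2, r3] at h
      simp only [map_zero, map_one, div_one, div_zero] at h
      linear_combination h
  rw [map_add, map_one] at e
  field_simp at e
  grind

lemma boom_nonfixed (hσ : ∀ x, σ (σ x) = x) {b x : K} (hb : σ b ≠ b)
    (h : boomSum σ b x = 0) : x = 0 ∨ x = 1 ∨ x = b ∨ x = b + 1 := by
  have h2 : (2 : K) = 0 := CharTwo.two_eq_zero
  by_contra! hx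
  obtain ⟨h0, h1, h3, h4⟩ := hx
  have h1' : x + 1 ≠ 0 := by intro h; apply h1; grind
  have h3' : x + b ≠ 0 := by intro h; apply h3; grind
  have h4' : x + 1 + b ≠ 0 := by intro h; apply h4; grind
  have E := (boom_generic σ h0 h1' h3' h4').1 h
  have E' := congrArg σ E
  simp only [map_mul, map_add, map_one, hσ] at E'
  have hs : σ b + b ≠ 0 := by intro h; apply hb; grind
  -- With `t = σ x + x` and `s = σ b + b`, the sum of the equation and its conjugate is
  -- `t * (s ^ 2 + s) = s * (t ^ 2 + t)`.
  have P : (σ b + b) * ((σ x + x) * (σ x + x + (σ b + b))) = 0 := by grind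
  rcases mul_eq_zero.1 P with P | P
  · exact hs P
  rcases mul_eq_zero.1 P with P | P
  · rw [P, zero_mul] at E
    simp [hs, h0, h1'] at E
  · have e : σ x + x = σ b + b := by grind
    rw [e] at E
    have E2 := mul_left_cancel₀ hs E
    have : (x + b) * (x + 1 + b) = 0 := by grind
    simp [h3', h4'] at this

lemma boom_fixed {b x : K} (hb0 : b ≠ 0) (hb1 : b ≠ 1) (hb : σ b = b) :
    boomSum σ b x = 0 ↔ σ x = x ∧ ¬ (x = 0 ∨ x = 1 ∨ x = b ∨ x = b + 1) := by
  have h2 : (2 : K) = 0 := CharTwo.two_eq_zero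
  by_cases hx : x = 0 ∨ x = 1 ∨ x = b ∨ x = b + 1
  · simp only [hx, not_true, and_false, iff_false]
    intro h
    have := boom_exceptional σ hb0 hb1 hx h
    have : b * (b - 1) = 0 := by grind
    simp [hb0, sub_eq_zero, hb1] at this
  · simp only [hx, not_false_iff, and_true]
    push Not at hx
    obtain ⟨h0, h1, h3, h4⟩ := hx
    have h1' : x + 1 ≠ 0 := by intro h; apply h1; grind
    have h3' : x + b ≠ 0 := by intro h; apply h3; grind
    have h4' : x + 1 + b ≠ 0 := by intro h; apply h4; grind
    have hb1' : b + 1 ≠ 0 := by intro h; apply hb1; grind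
    rw [boom_generic σ h0 h1' h3' h4', hb, CharTwo.add_self_eq_zero b]
    simp only [zero_mul, mul_eq_zero, hb0, hb1', or_false]
    constructor <;> intro h <;> grind

end Algebra

lemma FBCT_scale {K : Type*} [Field K] (F : K → K) (n : ℕ) (hF : ∀ X, F X = X ^ n) {a : K}
    (ha : a ≠ 0) (b : K) : FBCT F a b = FBCT F 1 (b / a) := by
  unfold FBCT
  symm
  refine Nat.card_congr ((Equiv.mulLeft₀ a ha).subtypeEquiv fun X => ?_)
  have key : F (a * X + a + b) + F (a * X + b) + F (a * X + a) + F (a * X) =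
      a ^ n * (F (X + 1 + b / a) + F (X + b / a) + F (X + 1) + F X) := by
    simp only [hF, mul_add, ← mul_pow]
    simp [mul_div_cancel₀ _ ha]
  simp only [Set.mem_ofPred_eq, Equiv.mulLeft₀_apply]
  rw [key]
  simp [ha]

/-- Counts the subfield of order `2 ^ m` of the field of order `2 ^ (2 * m)`, as the fixed points of
`x ↦ x ^ (2 ^ m)`. -/
lemma card_fixed {m : ℕ} (hm : m ≠ 0) :
    Set.ncard {x : GaloisField 2 (2 * m) | x ^ 2 ^ m = x} = 2 ^ m := by
  have hne : 2 * m ≠ 0 := by omega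
  have hd : Module.finrank (ZMod 2) (GaloisField 2 m) ∣
      Module.finrank (ZMod 2) (GaloisField 2 (2 * m)) := by
    rw [GaloisField.finrank 2 hm, GaloisField.finrank 2 hne]
    exact dvd_mul_left m 2
  obtain ⟨f⟩ := FiniteField.nonempty_algHom_of_finrank_dvd hd
  have hc : Nat.card (GaloisField 2 m) = 2 ^ m := GaloisField.card 2 m hm
  have hq : 1 < 2 ^ m := Nat.one_lt_two_pow hm
  apply le_antisymm
  · have hp : (Polynomial.X ^ 2 ^ m - Polynomial.X : Polynomial (GaloisField 2 (2 * m))) ≠ 0 :=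
      FiniteField.X_pow_card_sub_X_ne_zero _ hq
    have hdeg := FiniteField.X_pow_card_sub_X_natDegree_eq (GaloisField 2 (2 * m)) hq
    have hsub : {x : GaloisField 2 (2 * m) | x ^ 2 ^ m = x} ⊆
        ((Polynomial.X ^ 2 ^ m - Polynomial.X :
          Polynomial (GaloisField 2 (2 * m))).roots.toFinset : Set _) := by
      intro x hx
      have hx' : x ^ 2 ^ m = x := hx
      simp [hp, hx']
    refine (Set.ncard_le_ncard hsub (Finset.finite_toSet _)).trans ?_
    rw [Set.ncard_coe_finset]
    exact (Multiset.toFinset_card_le _).trans ((Polynomial.card_roots' _).trans hdeg.le)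
  · have hsub : Set.range f ⊆ {x : GaloisField 2 (2 * m) | x ^ 2 ^ m = x} := by
      rintro _ ⟨y, rfl⟩
      have : Fintype (GaloisField 2 m) := Fintype.ofFinite _
      have hy : y ^ 2 ^ m = y := by
        rw [← hc, Nat.card_eq_fintype_card, FiniteField.pow_card]
      simp only [Set.mem_ofPred_eq, ← map_pow, hy]
    have hinj : Function.Injective f := RingHom.injective f.toRingHom
    calc 2 ^ m = Set.ncard (Set.range f) := by
          rw [← Set.image_univ, Set.ncard_image_of_injective _ hinj, Set.ncard_univ, hc]
      _ ≤ _ := Set.ncard_le_ncard hsub (Set.toFinite _)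

/-- The four exceptional points, a two-dimensional `𝔽₂`-space. -/
lemma ncard_four {K : Type*} [Field K] [CharP K 2] {b : K} (hb0 : b ≠ 0) (hb1 : b ≠ 1) :
    Set.ncard {x : K | x = 0 ∨ x = 1 ∨ x = b ∨ x = b + 1} = 4 := by
  have h2 : (2 : K) = 0 := CharTwo.two_eq_zero
  have hb1' : b + 1 ≠ 0 := by intro h; apply hb1; grind
  have e : {x : K | x = 0 ∨ x = 1 ∨ x = b ∨ x = b + 1} = (({0, 1, b, b + 1} : Finset K) : Set K) := by
    ext x; simp
  rw [e, Set.ncard_coe_finset]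
  rw [Finset.card_insert_of_notMem, Finset.card_insert_of_notMem, Finset.card_insert_of_notMem,
    Finset.card_singleton]
  · simp
  · simp [hb0, hb1.symm]
  · simp [hb0.symm, hb1'.symm]

lemma pow_four_pow {K : Type*} [Field K] {b : K} (h : b ^ 4 = b) (r : ℕ) : b ^ 4 ^ r = b := by
  induction r with
  | zero => simp
  | succ r ih => rw [pow_succ, pow_mul, ih, h]

section Field

variable {m : ℕ}

/-- The conjugation `x ↦ x ^ (2 ^ m)` of the field of order `2 ^ (2 * m)`. -/
noncomputable def conj (m : ℕ) : GaloisField 2 (2 * m) →+* GaloisField 2 (2 * m) :=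
  iterateFrobenius _ 2 m

lemma conj_apply (x : GaloisField 2 (2 * m)) : conj m x = x ^ 2 ^ m := rfl

lemma conj_conj (hm : m ≠ 0) (x : GaloisField 2 (2 * m)) : conj m (conj m x) = x := by
  have : Fintype (GaloisField 2 (2 * m)) := Fintype.ofFinite _
  have hc : Nat.card (GaloisField 2 (2 * m)) = 2 ^ (2 * m) := GaloisField.card 2 _ (by omega)
  rw [conj_apply, conj_apply, ← pow_mul, ← pow_add, ← two_mul, ← hc, Nat.card_eq_fintype_card,
    FiniteField.pow_card]

lemma pow_eq_conj_div (hm : m ≠ 0) (x : GaloisField 2 (2 * m)) :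
    x ^ (2 ^ m - 1) = conj m x / x := by
  have hq : 1 < 2 ^ m := Nat.one_lt_two_pow hm
  rcases eq_or_ne x 0 with rfl | hx
  · simp [Nat.sub_ne_zero_of_lt hq]
  · rw [conj_apply, eq_div_iff hx, ← pow_succ, Nat.sub_add_cancel hq.le]

lemma FBCT_one_eq (hm : m ≠ 0) (F : GaloisField 2 (2 * m) → GaloisField 2 (2 * m))
    (hF : ∀ X, F X = X ^ (2 ^ m - 1)) (b : GaloisField 2 (2 * m)) :
    FBCT F 1 b = Set.ncard {x | boomSum (conj m) b x = 0} := by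
  unfold FBCT boomSum
  simp only [hF, pow_eq_conj_div hm]
  rfl

lemma card_fixed_case (hm : m ≠ 0) {b : GaloisField 2 (2 * m)} (hb0 : b ≠ 0) (hb1 : b ≠ 1)
    (hb : conj m b = b) : Set.ncard {x | boomSum (conj m) b x = 0} = 2 ^ m - 4 := by
  have e : {x | boomSum (conj m) b x = 0} =
      {x | x ^ 2 ^ m = x} \ {x | x = 0 ∨ x = 1 ∨ x = b ∨ x = b + 1} := by
    ext x
    simp only [Set.mem_ofPred_eq, boom_fixed (conj m) hb0 hb1 hb, Set.mem_sdiff, conj_apply]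
  rw [e, Set.ncard_sdiff _ (Set.toFinite _), card_fixed hm, ncard_four hb0 hb1]
  rintro x (rfl | rfl | rfl | rfl)
  · exact map_zero (conj m)
  · exact map_one (conj m)
  · exact hb
  · exact (map_add (conj m) _ _).trans (by rw [hb, map_one])

lemma card_nonfixed_case (hm0 : m ≠ 0) (hm : Even m ∨ (Odd m ∧ 2 < m))
    {b : GaloisField 2 (2 * m)} (hb0 : b ≠ 0) (hb1 : b ≠ 1)
    (hb : conj m b ≠ b) : Set.ncard {x | boomSum (conj m) b x = 0} ≤ 2 ^ m - 4 := by
  have hsub : {x | boomSum (conj m) b x = 0} ⊆ {x | x = 0 ∨ x = 1 ∨ x = b ∨ x = b + 1} :=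
    fun x hx => boom_nonfixed (conj m) (conj_conj hm0) hb hx
  rcases hm with hm | ⟨-, hm⟩
  · suffices h : {x | boomSum (conj m) b x = 0} = ∅ by simp [h]
    rw [Set.eq_empty_iff_forall_notMem]
    intro x hx
    have h := boom_exceptional (conj m) hb0 hb1 (hsub hx) hx
    have h4 : b ^ 4 = b := by
      have := conj_conj hm0 b
      rw [h, map_pow, h, ← pow_mul] at this
      exact this
    -- `b ∈ 𝔽₄` and `2 ^ m` is a power of `4`, so `b` is fixed by the conjugation.
    obtain ⟨r, rfl⟩ := hm
    apply hb
    rw [conj_apply, show 2 ^ (r + r) = 4 ^ r by rw [← two_mul, pow_mul]; norm_num]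
    exact pow_four_pow h4 r
  · have h8 : 2 ^ 3 ≤ 2 ^ m := Nat.pow_le_pow_right (by norm_num) hm
    have := Set.ncard_le_ncard hsub (Set.toFinite _)
    rw [ncard_four hb0 hb1] at this
    omega

end Field

theorem feistel_boomerang_unif_pow_two_pow_m_sub_one (m : ℕ) (hm0 : 0 < m)
    (hm : Even m ∨ (Odd m ∧ 2 < m))
    (F : GaloisField 2 (2 * m) → GaloisField 2 (2 * m))
    (hF : ∀ X, F X = X ^ (2 ^ m - 1)) :
    IsGreatest
      {k : ℕ | ∃ a b : GaloisField 2 (2 * m), a ≠ 0 ∧ b ≠ 0 ∧ a ≠ b ∧ k = FBCT F a b}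
      (2 ^ m - 4) := by
  have hm0' : m ≠ 0 := hm0.ne'
  constructor
  · -- Any `b` in the subfield of order `2 ^ m ≥ 4` other than `0` and `1` attains the bound.
    have hm2 : 2 ≤ m := by
      rcases hm with ⟨r, rfl⟩ | ⟨-, h⟩ <;> omega
    have h4 : 2 ^ 2 ≤ 2 ^ m := Nat.pow_le_pow_right (by norm_num) hm2
    obtain ⟨b, hb, hb'⟩ : ∃ b ∈ {x : GaloisField 2 (2 * m) | x ^ 2 ^ m = x},
        b ∉ ({0, 1} : Set (GaloisField 2 (2 * m))) := by
      refine Set.exists_mem_notMem_of_ncard_lt_ncard ?_ (Set.toFinite _)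
      rw [card_fixed hm0', Set.ncard_pair zero_ne_one]
      omega
    simp only [Set.mem_insert_iff, Set.mem_singleton_iff, not_or] at hb'
    exact ⟨1, b, one_ne_zero, hb'.1, Ne.symm hb'.2, by
      rw [FBCT_one_eq hm0' F hF, card_fixed_case hm0' hb'.1 hb'.2 hb]⟩
  · rintro _ ⟨a, b, ha, hb, hab, rfl⟩
    have hc0 : b / a ≠ 0 := div_ne_zero hb ha
    have hc1 : b / a ≠ 1 := fun h => hab ((div_eq_one_iff_eq ha).1 h).symm
    rw [FBCT_scale F _ hF ha, FBCT_one_eq hm0' F hF]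
    by_cases hc : conj m (b / a) = b / a
    · exact (card_fixed_case hm0' hc0 hc1 hc).le
    · exact card_nonfixed_case hm0' hm hc0 hc1 hc
end

section
/- Let m ≥ 1, n = 2m, and F₁(X) = X^{2^m − 1} on F_{2^n}. Then the number of vanishing flats of F₁ is #VB_{n,F₁} = (2^{m−2} − 1)(2^{m−1} − 1)(2^n − 1)/3 if m is even, and #VB_{n,F₁} = ((2^{m−2} − 1)(2^{m−1} − 1) + 1)(2^n − 1)/3 if m is odd. -/
/-!
Write `q = 2 ^ m` and `φ x = x ^ q`, an involution of the field `K` of order `q ^ 2`.  The power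
map is `F x = φ x / x` with `F 0 = 0`, so its nonzero values `u` lie on the unit circle
`u * φ u = 1`, and its fibres on nonzero elements are the sets `L \ {0}` for the `q + 1` lines `L`
through the origin of the plane `K` over the field of order `q`.

* On a vanishing flat avoiding `0`, the four values have sum zero, and so do their inverses; hence
  they coincide in pairs (`circle_four`).  They are then all equal, as otherwise
  `x₁ + x₂ = x₃ + x₄ ≠ 0` would lie on two different lines (`value_eq_of_flat`).  Conversely any
  flat avoiding `0` inside one line vanishes.  Counting ordered triples of points, there are
  `(q ^ 2 - 1) * (q - 2) * (q - 4) / 24` such flats (`card_flatsAvoid`).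
* On a vanishing flat `{0, a, b, c}`, three points of the unit circle have sum zero, which forces
  `b` and `c` to be the multiples of `a` by the primitive cube roots of unity (`flat_zero`).  For
  odd `m` all the sets `{0, a, ω a, ω² a}` are vanishing flats, and there are `(q ^ 2 - 1) / 3` of
  them (`card_flatsThrough`).  For even `m` the cube roots of unity are fixed by `φ`, and no
  vanishing flat contains `0` (`flatsThrough_eq_empty`).
-/

open scoped Classical

/-! ### Values of the power map -/

/-- `F` is the map `x ↦ φ x / x` (with `F 0 = 0`), where `φ` is an involution of the field `K`
of characteristic two.  For `φ x = x ^ (2 ^ m)` this is the power map `x ↦ x ^ (2 ^ m - 1)`. -/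
structure IsConjQuotient {K : Type*} [Field K] (φ : K →+* K) (F : K → K) : Prop where
  two_eq_zero : (2 : K) = 0
  invol : ∀ x, φ (φ x) = x
  map_zero : F 0 = 0
  mul_self : ∀ x, F x * x = φ x

namespace IsConjQuotient

variable {K : Type*} [Field K] {φ : K →+* K} {F : K → K}

lemma ne_zero (h : IsConjQuotient φ F) {x : K} (hx : x ≠ 0) : F x ≠ 0 := by
  intro h0
  have := h.mul_self x
  rw [h0, zero_mul] at this
  exact hx ((map_eq_zero φ).1 this.symm)

/-- Nonzero arguments have values on the unit circle `{u | u * φ u = 1}`. -/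
lemma map_value (h : IsConjQuotient φ F) {x : K} (hx : x ≠ 0) : φ (F x) * F x = 1 := by
  have h1 := congrArg φ (h.mul_self x)
  rw [map_mul, h.invol, ← h.mul_self x] at h1
  apply mul_right_cancel₀ hx
  linear_combination h1

lemma eq_of_add_eq_zero (h : IsConjQuotient φ F) {x y : K} (hxy : x + y = 0) : x = y := by
  linear_combination hxy - y * h.two_eq_zero

lemma add_self (h : IsConjQuotient φ F) (x : K) : x + x = 0 := by
  linear_combination x * h.two_eq_zero

lemma add_ne_zero (h : IsConjQuotient φ F) {x y : K} (hxy : x ≠ y) : x + y ≠ 0 :=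
  fun h0 => hxy (h.eq_of_add_eq_zero h0)

lemma value_eq (h : IsConjQuotient φ F) {x u : K} (hx : x ≠ 0) (hu : φ x = u * x) : F x = u :=
  mul_right_cancel₀ hx ((h.mul_self x).trans hu)

/-- The nonempty fibres of `F` on nonzero elements are, together with `0`, closed under
addition. -/
lemma value_add (h : IsConjQuotient φ F) {x y : K} (hxy : x ≠ y) (hF : F x = F y) :
    F (x + y) = F y := by
  apply h.value_eq (h.add_ne_zero hxy)
  rw [map_add, ← h.mul_self x, ← h.mul_self y, hF]
  ring

/-- Four points of the unit circle with sum zero coincide in pairs: their inverses also sum to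
zero, so the first and third elementary symmetric functions vanish, and
`(u₁ + u₂)(u₁ + u₃)(u₁ + u₄) = u₁² e₁ + e₃`. -/
lemma circle_four (h : IsConjQuotient φ F) {u₁ u₂ u₃ u₄ : K}
    (h₁ : φ u₁ * u₁ = 1) (h₂ : φ u₂ * u₂ = 1) (h₃ : φ u₃ * u₃ = 1) (h₄ : φ u₄ * u₄ = 1)
    (hs : u₁ + u₂ + u₃ + u₄ = 0) : u₁ = u₂ ∨ u₁ = u₃ ∨ u₁ = u₄ := by
  have hs' : φ u₁ + φ u₂ + φ u₃ + φ u₄ = 0 := by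
    rw [← map_add, ← map_add, ← map_add, hs, _root_.map_zero]
  have e3 : u₂ * u₃ * u₄ + u₁ * u₃ * u₄ + u₁ * u₂ * u₄ + u₁ * u₂ * u₃ = 0 := by
    linear_combination (u₁ * u₂ * u₃ * u₄) * hs' - u₂ * u₃ * u₄ * h₁ - u₁ * u₃ * u₄ * h₂
      - u₁ * u₂ * u₄ * h₃ - u₁ * u₂ * u₃ * h₄
  have hp : (u₁ + u₂) * ((u₁ + u₃) * (u₁ + u₄)) = 0 := by
    linear_combination u₁ ^ 2 * hs + e3
  rcases mul_eq_zero.1 hp with h0 | h0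
  · exact Or.inl (h.eq_of_add_eq_zero h0)
  · rcases mul_eq_zero.1 h0 with h0 | h0
    · exact Or.inr (Or.inl (h.eq_of_add_eq_zero h0))
    · exact Or.inr (Or.inr (h.eq_of_add_eq_zero h0))

/-- If the values of `F` on a flat coincide in pairs, then they all coincide: otherwise
`x₁ + x₂ = x₃ + x₄` would lie in two different fibres. -/
lemma value_eq_of_pair (h : IsConjQuotient φ F) {x₁ x₂ x₃ x₄ : K} (h12 : x₁ ≠ x₂)
    (hs : x₁ + x₂ + x₃ + x₄ = 0) (hF : F x₁ + F x₂ + F x₃ + F x₄ = 0) (he : F x₁ = F x₂) :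
    F x₂ = F x₁ ∧ F x₃ = F x₁ ∧ F x₄ = F x₁ := by
  have h2 := h.two_eq_zero
  have hsum : x₃ + x₄ = x₁ + x₂ := h.eq_of_add_eq_zero (by linear_combination hs)
  have h34 : F x₃ = F x₄ :=
    h.eq_of_add_eq_zero (by linear_combination hF + he - F x₁ * h2)
  have hne : x₃ ≠ x₄ := by
    rintro rfl
    exact h.add_ne_zero h12 (by rw [← hsum, h.add_self])
  have e1 := h.value_add h12 he
  have e2 := h.value_add hne h34
  rw [hsum] at e2
  exact ⟨he.symm, by rw [h34, ← e2, e1, he], by rw [← e2, e1, he]⟩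

lemma value_eq_of_flat (h : IsConjQuotient φ F) {x₁ x₂ x₃ x₄ : K}
    (n₁ : x₁ ≠ 0) (n₂ : x₂ ≠ 0) (n₃ : x₃ ≠ 0) (n₄ : x₄ ≠ 0)
    (h12 : x₁ ≠ x₂) (h13 : x₁ ≠ x₃) (h14 : x₁ ≠ x₄)
    (hs : x₁ + x₂ + x₃ + x₄ = 0) (hF : F x₁ + F x₂ + F x₃ + F x₄ = 0) :
    F x₂ = F x₁ ∧ F x₃ = F x₁ ∧ F x₄ = F x₁ := by
  rcases h.circle_four (h.map_value n₁) (h.map_value n₂) (h.map_value n₃) (h.map_value n₄) hF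
    with he | he | he
  · exact h.value_eq_of_pair h12 hs hF he
  · obtain ⟨a, b, c⟩ := h.value_eq_of_pair (x₃ := x₂) (x₄ := x₄) h13
      (by linear_combination hs) (by linear_combination hF) he
    exact ⟨b, a, c⟩
  · obtain ⟨a, b, c⟩ := h.value_eq_of_pair (x₃ := x₂) (x₄ := x₃) h14
      (by linear_combination hs) (by linear_combination hF) he
    exact ⟨b, c, a⟩

/-- Three points of the unit circle with sum zero satisfy `v² + uv + u² = 0`, since also
`1/u + 1/v + 1/w = 0`. -/
lemma circle_three {u v w : K}
    (h₁ : φ u * u = 1) (h₂ : φ v * v = 1) (h₃ : φ w * w = 1)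
    (hs : u + v + w = 0) : v ^ 2 + u * v + u ^ 2 = 0 := by
  have hs' : φ u + φ v + φ w = 0 := by
    rw [← map_add, ← map_add, hs, _root_.map_zero]
  have e2 : v * w + u * w + u * v = 0 := by
    linear_combination (u * v * w) * hs' - v * w * h₁ - u * w * h₂ - u * v * h₃
  linear_combination (u + v) * hs - e2

/-- The points of a vanishing flat through `0` and `a` are the multiples of `a` by the cube
roots of unity. -/
lemma flat_zero (h : IsConjQuotient φ F) {ω a b c : K} (hω : ω ^ 2 + ω + 1 = 0)
    (ha : a ≠ 0) (hb : b ≠ 0) (hc : c ≠ 0) (hs : a + b + c = 0)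
    (hF : F a + F b + F c = 0) :
    b = ω * a ∨ b = ω ^ 2 * a := by
  have h2 := h.two_eq_zero
  have hq := circle_three (h.map_value ha) (h.map_value hb) (h.map_value hc) hF
  have hc' : c = a + b := (h.eq_of_add_eq_zero hs).symm
  have key : ∀ z : K, F b = z * F a → b = z * a := by
    intro z hv
    have hFc : F c = F a + F b := (h.eq_of_add_eq_zero hF).symm
    have e := h.mul_self c
    rw [hc', map_add, ← h.mul_self a, ← h.mul_self b, ← hc', hFc, hv, hc'] at e
    have : F a * (b + z * a) = 0 := by linear_combination e
    rcases mul_eq_zero.1 this with h0 | h0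
    · exact absurd h0 (h.ne_zero ha)
    · exact h.eq_of_add_eq_zero h0
  have hp : (F b + ω * F a) * (F b + ω ^ 2 * F a) = 0 := by
    linear_combination hq + (F a * F b + (ω - 1) * F a ^ 2) * hω - F a * F b * h2
  rcases mul_eq_zero.1 hp with h0 | h0
  · exact Or.inl (key ω (h.eq_of_add_eq_zero h0))
  · exact Or.inr (key (ω ^ 2) (h.eq_of_add_eq_zero h0))

/-! ### Four-point flats -/

lemma eq_of_mem_of_card_four (h : IsConjQuotient φ F) {s : Finset K} (hs : s.card = 4)
    (h0 : ∑ x ∈ s, x = 0) {a b c : K} (ha : a ∈ s) (hb : b ∈ s) (hc : c ∈ s)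
    (hab : a ≠ b) (hac : a ≠ c) (hbc : b ≠ c) : s = {a, b, c, a + b + c} := by
  have h2 := h.two_eq_zero
  have hsub : ({a, b, c} : Finset K) ⊆ s := by
    intro x
    simp only [Finset.mem_insert, Finset.mem_singleton]
    rintro (rfl | rfl | rfl) <;> assumption
  have hc3 : ({a, b, c} : Finset K).card = 3 := Finset.card_eq_three.2 ⟨a, b, c, hab, hac, hbc, rfl⟩
  have hd : (s \ {a, b, c}).card = 1 := by
    rw [Finset.card_sdiff_of_subset hsub, hs, hc3]
  obtain ⟨d, hd⟩ := Finset.card_eq_one.1 hd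
  have hsum := Finset.sum_sdiff (f := fun x => x) hsub
  rw [hd, h0, Finset.sum_singleton, Finset.sum_insert (by simp [hab, hac]),
    Finset.sum_insert (by simp [hbc]), Finset.sum_singleton] at hsum
  have hd' : d = a + b + c := h.eq_of_add_eq_zero (by linear_combination hsum)
  rw [← Finset.union_sdiff_of_subset hsub, hd, hd']
  ext x
  simp only [Finset.mem_union, Finset.mem_insert, Finset.mem_singleton]
  tauto

lemma sum_four {a b c d : K} (hab : a ≠ b) (hac : a ≠ c) (hbc : b ≠ c) (had : a ≠ d)
    (hbd : b ≠ d) (hcd : c ≠ d) (f : K → K) :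
    ∑ x ∈ ({a, b, c, d} : Finset K), f x = f a + f b + f c + f d := by
  rw [Finset.sum_insert (by simp [hab, hac, had]), Finset.sum_insert (by simp [hbc, hbd]),
    Finset.sum_insert (by simp [hcd]), Finset.sum_singleton]
  ring

lemma mem_four {a b c d : K} (hab : a ≠ b) (hac : a ≠ c) (hbc : b ≠ c) (had : a ≠ d)
    (hbd : b ≠ d) (hcd : c ≠ d) (hs : a + b + c + d = 0) (hF : F a + F b + F c + F d = 0) :
    ({a, b, c, d} : Finset K) ∈ vanishingFlats F := by
  refine ⟨?_, ?_, ?_⟩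
  · rw [Finset.card_insert_of_notMem (by simp [hab, hac, had]),
      Finset.card_insert_of_notMem (by simp [hbc, hbd]),
      Finset.card_insert_of_notMem (by simp [hcd]), Finset.card_singleton]
  · rw [sum_four hab hac hbc had hbd hcd (fun x => x), hs]
  · rw [sum_four hab hac hbc had hbd hcd F, hF]

/-- The fourth point of a flat is distinct from the three others. -/
lemma fourth_ne (h : IsConjQuotient φ F) {a b c : K} (hab : a ≠ b) (hac : a ≠ c) (hbc : b ≠ c) :
    a ≠ a + b + c ∧ b ≠ a + b + c ∧ c ≠ a + b + c := by
  have h2 := h.two_eq_zero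
  refine ⟨fun e => hbc ?_, fun e => hac ?_, fun e => hab ?_⟩ <;> apply h.eq_of_add_eq_zero
  · linear_combination -e
  · linear_combination -e
  · linear_combination -e

/-! ### Flats avoiding zero -/

section counting

variable [Fintype K]

/-- The vanishing flats of `F` that avoid `0`. -/
noncomputable def flatsAvoid (F : K → K) : Finset (Finset K) :=
  Finset.univ.filter fun s => s ∈ vanishingFlats F ∧ 0 ∉ s

/-- The vanishing flats of `F` that contain `0`. -/
noncomputable def flatsThrough (F : K → K) : Finset (Finset K) :=
  Finset.univ.filter fun s => s ∈ vanishingFlats F ∧ 0 ∈ s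

/-- The nonzero elements on which `F` takes the value `F a`. -/
noncomputable def fibre (F : K → K) (a : K) : Finset K :=
  Finset.univ.filter fun x => x ≠ 0 ∧ F x = F a

/-- Triples `(a, b, c)` of distinct elements of one fibre with `a + b + c ≠ 0`; these are the
ordered choices of three points on a flat avoiding `0`. -/
noncomputable def triples (F : K → K) : Finset (Σ _ : K, Σ _ : K, K) :=
  (Finset.univ.erase (0 : K)).sigma fun a => ((fibre F a).erase a).sigma fun b =>
    (((fibre F a).erase a).erase b).erase (a + b)

/-- `F` is constant on a vanishing flat avoiding `0`. -/
lemma value_const (h : IsConjQuotient φ F) {s : Finset K} (hs : s ∈ flatsAvoid F)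
    {x y : K} (hx : x ∈ s) (hy : y ∈ s) : F y = F x := by
  obtain ⟨⟨h4, hs0, hsF⟩, h0⟩ := (Finset.mem_filter.1 hs).2
  by_cases hxy : x = y
  · rw [hxy]
  have hpos : 0 < ((s.erase x).erase y).card := by
    rw [Finset.card_erase_of_mem (by simp [Ne.symm hxy, hy]), Finset.card_erase_of_mem hx, h4]
    norm_num
  obtain ⟨z, hz⟩ := Finset.card_pos.1 hpos
  simp only [Finset.mem_erase] at hz
  obtain ⟨hzy, hzx, hz⟩ := hz
  have hS := h.eq_of_mem_of_card_four h4 hs0 hx hy hz hxy (Ne.symm hzx) (Ne.symm hzy)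
  obtain ⟨d1, d2, d3⟩ := h.fourth_ne hxy (Ne.symm hzx) (Ne.symm hzy)
  have hw : x + y + z ∈ s := by
    rw [hS]; simp
  rw [hS, sum_four hxy (Ne.symm hzx) (Ne.symm hzy) d1 d2 d3 F] at hsF
  exact (h.value_eq_of_flat (ne_of_mem_of_not_mem hx h0) (ne_of_mem_of_not_mem hy h0)
    (ne_of_mem_of_not_mem hz h0) (ne_of_mem_of_not_mem hw h0) hxy (Ne.symm hzx) d1
    (by linear_combination (x + y + z) * h.two_eq_zero) hsF).1

/-- Each triple spans one flat, and each flat has `4 * 3 * 2` ordered choices of three points. -/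
lemma card_triples (h : IsConjQuotient φ F) : (triples F).card * 1 = (flatsAvoid F).card * 24 := by
  have h2 := h.two_eq_zero
  apply Finset.card_mul_eq_card_mul
    (fun (t : Σ _ : K, Σ _ : K, K) (s : Finset K) => t.1 ∈ s ∧ t.2.1 ∈ s ∧ t.2.2 ∈ s)
  · rintro ⟨a, b, c⟩ ht
    simp only [triples, fibre, Finset.mem_sigma, Finset.mem_erase, Finset.mem_filter,
      Finset.mem_univ, true_and, and_true] at ht
    obtain ⟨ha, ⟨hba, hb, hFb⟩, hcab, hcb, hca, hc, hFc⟩ := ht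
    obtain ⟨d1, d2, d3⟩ := h.fourth_ne (Ne.symm hba) (Ne.symm hca) (Ne.symm hcb)
    rw [Finset.card_eq_one]
    refine ⟨{a, b, c, a + b + c}, ?_⟩
    ext s
    simp only [Finset.mem_bipartiteAbove, Finset.mem_singleton, flatsAvoid, Finset.mem_filter,
      Finset.mem_univ, true_and]
    constructor
    · rintro ⟨⟨⟨h4, hs0, -⟩, -⟩, has, hbs, hcs⟩
      exact h.eq_of_mem_of_card_four h4 hs0 has hbs hcs (Ne.symm hba) (Ne.symm hca) (Ne.symm hcb)
    · rintro rfl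
      have hab : F (a + b) = F a := by rw [h.value_add (Ne.symm hba) hFb.symm, hFb]
      have habc : F (a + b + c) = F a := by
        rw [h.value_add (Ne.symm hcab) (by rw [hab, hFc]), hFc]
      have hn : a + b + c ≠ 0 := h.add_ne_zero (Ne.symm hcab)
      refine ⟨⟨mem_four (Ne.symm hba) (Ne.symm hca) (Ne.symm hcb) d1 d2 d3
        (by linear_combination (a + b + c) * h2) ?_, ?_⟩, by simp⟩
      · rw [hFb, hFc, habc]; linear_combination 2 * F a * h2
      · simp [Ne.symm ha, Ne.symm hb, Ne.symm hc, Ne.symm hn]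
  · intro s hs
    obtain ⟨⟨h4, hs0, hsF⟩, h0⟩ := (Finset.mem_filter.1 hs).2
    have hset : (triples F).bipartiteBelow (fun (t : Σ _ : K, Σ _ : K, K) (s : Finset K) =>
        t.1 ∈ s ∧ t.2.1 ∈ s ∧ t.2.2 ∈ s) s =
        s.sigma fun a => (s.erase a).sigma fun b => (s.erase a).erase b := by
      ext ⟨a, b, c⟩
      simp only [triples, fibre, Finset.mem_bipartiteBelow, Finset.mem_sigma, Finset.mem_erase,
        Finset.mem_filter, Finset.mem_univ, true_and, and_true]
      constructor
      · tauto
      · rintro ⟨ha, ⟨hba, hb⟩, hcb, hca, hc⟩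
        have hS := h.eq_of_mem_of_card_four h4 hs0 ha hb hc (Ne.symm hba) (Ne.symm hca)
          (Ne.symm hcb)
        have hw : a + b + c ∈ s := by
          rw [hS]; simp
        have hcab : c ≠ a + b := by
          rintro rfl
          rw [h.add_self] at hw
          exact h0 hw
        exact ⟨⟨ne_of_mem_of_not_mem ha h0, ⟨hba, ne_of_mem_of_not_mem hb h0,
          h.value_const hs ha hb⟩, hcab, hcb, hca, ne_of_mem_of_not_mem hc h0,
          h.value_const hs ha hc⟩, ha, hb, hc⟩
    rw [hset, Finset.card_sigma, Finset.sum_const_nat (m := 6), h4]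
    intro a ha
    have h3 : (s.erase a).card = 3 := by rw [Finset.card_erase_of_mem ha, h4]
    rw [Finset.card_sigma, Finset.sum_const_nat (m := 2), h3]
    intro b hb
    rw [Finset.card_erase_of_mem hb, h3]

lemma card_flatsAvoid (h : IsConjQuotient φ F) {k : ℕ}
    (hk : ∀ a : K, a ≠ 0 → (fibre F a).card = k) :
    (flatsAvoid F).card * 24 = (Fintype.card K - 1) * ((k - 1) * (k - 3)) := by
  rw [← h.card_triples, mul_one, triples, Finset.card_sigma,
    Finset.sum_const_nat (m := (k - 1) * (k - 3)), Finset.card_erase_of_mem (Finset.mem_univ _),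
    Finset.card_univ]
  intro a ha
  have ha0 : a ≠ 0 := (Finset.mem_erase.1 ha).1
  have haf : a ∈ fibre F a := by simp [fibre, ha0]
  rw [Finset.card_sigma, Finset.sum_const_nat (m := k - 3), Finset.card_erase_of_mem haf, hk a ha0]
  intro b hb
  have hb' := hb
  simp only [fibre, Finset.mem_erase, Finset.mem_filter, Finset.mem_univ, true_and] at hb'
  obtain ⟨hba, hb0, hFb⟩ := hb'
  have hab : a + b ∈ ((fibre F a).erase a).erase b := by
    simp only [fibre, Finset.mem_erase, Finset.mem_filter, Finset.mem_univ, true_and]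
    refine ⟨by simpa using ha0, by simpa using hb0, h.add_ne_zero (Ne.symm hba), ?_⟩
    rw [h.value_add (Ne.symm hba) hFb.symm, hFb]
  rw [Finset.card_erase_of_mem hab, Finset.card_erase_of_mem hb, Finset.card_erase_of_mem haf,
    hk a ha0]
  omega

/-! ### Flats through zero -/

/-- If `φ` squares the primitive cube roots of unity, each nonzero `a` lies on exactly one
vanishing flat through `0`, namely `{0, a, ω a, ω² a}`. -/
lemma card_flatsThrough (h : IsConjQuotient φ F) {ω : K} (hω : ω ^ 2 + ω + 1 = 0)
    (hφ : φ ω = ω ^ 2) : (Fintype.card K - 1) * 1 = (flatsThrough F).card * 3 := by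
  have h2 := h.two_eq_zero
  rw [← Finset.card_univ, ← Finset.card_erase_of_mem (Finset.mem_univ (0 : K))]
  apply Finset.card_mul_eq_card_mul (fun (a : K) (s : Finset K) => a ∈ s)
  · intro a ha
    have ha : a ≠ 0 := (Finset.mem_erase.1 ha).1
    have hω0 : ω ≠ 0 := by rintro rfl; simp at hω
    have hω1 : ω ≠ 1 := by
      rintro rfl
      exact one_ne_zero (α := K) (by linear_combination hω - h2)
    have hω2 : ω ^ 2 = 1 + ω := h.eq_of_add_eq_zero (by linear_combination hω)
    have hn : a ≠ ω * a := fun e => hω1 (mul_right_cancel₀ ha (by rw [one_mul, ← e]))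
    have hn0 : ω * a ≠ 0 := mul_ne_zero hω0 ha
    obtain ⟨d1, d2, d3⟩ := h.fourth_ne (Ne.symm ha) (Ne.symm hn0) hn
    rw [Finset.card_eq_one]
    refine ⟨{0, a, ω * a, 0 + a + ω * a}, ?_⟩
    ext s
    simp only [Finset.mem_bipartiteAbove, Finset.mem_singleton, flatsThrough, Finset.mem_filter,
      Finset.mem_univ, true_and]
    constructor
    · rintro ⟨⟨⟨h4, hs0, hsF⟩, h0⟩, has⟩
      have hpos : 0 < ((s.erase 0).erase a).card := by
        rw [Finset.card_erase_of_mem (by simp [ha, has]), Finset.card_erase_of_mem h0, h4]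
        norm_num
      obtain ⟨b, hb⟩ := Finset.card_pos.1 hpos
      simp only [Finset.mem_erase] at hb
      obtain ⟨hba, hb0, hb⟩ := hb
      obtain ⟨c1, c2, c3⟩ := h.fourth_ne (Ne.symm ha) (Ne.symm hb0) (Ne.symm hba)
      have hS := h.eq_of_mem_of_card_four h4 hs0 h0 has hb (Ne.symm ha) (Ne.symm hb0)
        (Ne.symm hba)
      rw [hS, sum_four (Ne.symm ha) (Ne.symm hb0) (Ne.symm hba) c1 c2 c3 F, h.map_zero,
        zero_add] at hsF
      apply h.eq_of_mem_of_card_four h4 hs0 h0 has _ (Ne.symm ha) (Ne.symm hn0) hn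
      rw [hS]
      rcases h.flat_zero hω ha hb0 (Ne.symm c1) (by linear_combination (a + b) * h2) hsF
        with e | e
      · rw [e]; simp
      · have : 0 + a + b = ω * a := by
          rw [e, hω2]; linear_combination a * h2
        rw [this]; simp
    · rintro rfl
      refine ⟨⟨mem_four (Ne.symm ha) (Ne.symm hn0) hn d1 d2 d3
        (by linear_combination (a + ω * a) * h2) ?_, by simp⟩, by simp⟩
      have e1 : F (ω * a) = ω * F a := by
        apply h.value_eq hn0
        rw [map_mul, hφ, ← h.mul_self]; ring
      have e2 : F (0 + a + ω * a) = (1 + ω) * F a := by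
        apply h.value_eq (Ne.symm d1)
        rw [map_add, map_add, map_mul, hφ, ← h.mul_self a, _root_.map_zero]
        linear_combination -(ω * F a * a) * h2
      rw [h.map_zero, e1, e2]
      linear_combination (F a + ω * F a) * h2
  · intro s hs
    obtain ⟨⟨h4, -, -⟩, h0⟩ := (Finset.mem_filter.1 hs).2
    have : (Finset.univ.erase (0 : K)).bipartiteBelow (fun (a : K) (s : Finset K) => a ∈ s) s
        = s.erase 0 := by
      ext x
      simp [Finset.mem_bipartiteBelow]
    rw [this, Finset.card_erase_of_mem h0, h4]

/-- If `φ` fixes the cube roots of unity, they are not quotients of distinct points of the unit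
circle, so no vanishing flat passes through `0`. -/
lemma flatsThrough_eq_empty (h : IsConjQuotient φ F) {ω : K} (hω : ω ^ 2 + ω + 1 = 0)
    (hφ : φ ω = ω) : flatsThrough F = ∅ := by
  have h2 := h.two_eq_zero
  rw [Finset.eq_empty_iff_forall_notMem]
  intro s hs
  obtain ⟨⟨h4, hs0, hsF⟩, h0⟩ := (Finset.mem_filter.1 hs).2
  have h3 : (s.erase 0).card = 3 := by rw [Finset.card_erase_of_mem h0, h4]
  obtain ⟨a, b, c, hab, hac, hbc, hS⟩ := Finset.card_eq_three.1 h3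
  have hne : ∀ x ∈ ({a, b, c} : Finset K), x ≠ 0 := by
    intro x hx
    rw [← hS] at hx
    exact (Finset.mem_erase.1 hx).1
  have ha := hne a (by simp)
  have hb := hne b (by simp)
  have hc := hne c (by simp)
  rw [← Finset.insert_erase h0, hS,
    sum_four (Ne.symm ha) (Ne.symm hb) hab (Ne.symm hc) hac hbc] at hs0 hsF
  rw [h.map_zero, zero_add] at hsF
  rw [zero_add] at hs0
  -- `b` is an element of the fixed field times `a`, whence `F b = F a`.
  have hFb : F b = F a := by
    apply h.value_eq hb
    rcases h.flat_zero hω ha hb hc hs0 hsF with e | e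
    · rw [e, map_mul, hφ, ← h.mul_self]; ring
    · rw [e, map_mul, map_pow, hφ, ← h.mul_self]; ring
  apply h.ne_zero hc
  rw [hFb] at hsF
  linear_combination hsF - F a * h2

lemma card_vanishingFlats (F : K → K) :
    Nat.card (vanishingFlats F) = (flatsThrough F).card + (flatsAvoid F).card := by
  have : Nat.card (vanishingFlats F) = (Finset.univ.filter (· ∈ vanishingFlats F)).card := by
    rw [Nat.card_coe_set_eq, Set.ncard_eq_toFinset_card']
    congr 1
    ext s
    simp
  rw [this, ← Finset.card_filter_add_card_filter_not (fun s : Finset K => (0 : K) ∈ s),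
    Finset.filter_filter, Finset.filter_filter]
  rfl

end counting

end IsConjQuotient

/-! ### The power map on a field of order `2 ^ (2 * m)` -/

lemma pow_two_pow_cube_root {K : Type*} [Field K] {ω : K} (hω : ω ^ 2 + ω + 1 = 0) (m : ℕ) :
    (Even m → ω ^ 2 ^ m = ω) ∧ (Odd m → ω ^ 2 ^ m = ω ^ 2) := by
  have he : ∀ k : ℕ, ω ^ 2 ^ (k + k) = ω := by
    intro k
    induction k with
    | zero => simp
    | succ k ih =>
      have : (2 : ℕ) ^ (k + 1 + (k + 1)) = 2 ^ (k + k) * 4 := by ring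
      rw [this, pow_mul, ih]
      linear_combination (ω ^ 2 - ω) * hω
  refine ⟨?_, ?_⟩
  · rintro ⟨k, rfl⟩
    exact he k
  · rintro ⟨k, rfl⟩
    rw [two_mul, pow_succ, pow_mul, he]

section power

variable {K : Type*} [Field K] [Fintype K]

/-- Fibres of `x ↦ x ^ (q - 1)` are cosets of the group of `(q - 1)`-st roots of unity. -/
lemma card_fibre_pow {q : ℕ} (hq : 2 ≤ q) (hK : Fintype.card K = q * q) {a : K} (ha : a ≠ 0) :
    (IsConjQuotient.fibre (fun x : K => x ^ (q - 1)) a).card = q - 1 := by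
  have hprim : ∃ ζ : K, IsPrimitiveRoot ζ (q - 1) := by
    obtain ⟨g, hg⟩ := IsCyclic.exists_ofOrder_eq_natCard (α := Kˣ)
    have hcard : Nat.card Kˣ = (q + 1) * (q - 1) := by
      rw [Nat.card_eq_fintype_card, Fintype.card_units, hK]
      obtain ⟨r, rfl⟩ := Nat.exists_eq_add_of_le hq
      have : 2 + r - 1 = r + 1 := by omega
      rw [this, Nat.sub_eq_iff_eq_add (by nlinarith)]
      ring
    have hp := IsPrimitiveRoot.orderOf g
    rw [hg, hcard] at hp
    have hp' := hp.pow (Nat.mul_pos (by omega) (by omega)) rfl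
    exact ⟨_, (IsPrimitiveRoot.coe_units_iff).2 hp'⟩
  obtain ⟨ζ, hζ⟩ := hprim
  have himg : IsConjQuotient.fibre (fun x : K => x ^ (q - 1)) a =
      (Polynomial.nthRootsFinset (q - 1) (1 : K)).image (fun y => y * a) := by
    ext x
    simp only [IsConjQuotient.fibre, Finset.mem_filter, Finset.mem_univ, true_and,
      Finset.mem_image, Polynomial.mem_nthRootsFinset (show 0 < q - 1 by omega)]
    constructor
    · rintro ⟨hx, hxa⟩
      refine ⟨x / a, ?_, div_mul_cancel₀ x ha⟩
      rw [div_pow, hxa, div_self (pow_ne_zero _ ha)]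
    · rintro ⟨y, hy, rfl⟩
      refine ⟨mul_ne_zero ?_ ha, by rw [mul_pow, hy, one_mul]⟩
      rintro rfl
      rw [zero_pow (by omega)] at hy
      exact zero_ne_one hy
  rw [himg, Finset.card_image_of_injective _ (mul_left_injective₀ ha), hζ.card_nthRootsFinset]

lemma isConjQuotient_pow [CharP K 2] {m : ℕ} (hm : 1 ≤ m)
    (hK : Fintype.card K = 2 ^ m * 2 ^ m) :
    IsConjQuotient (iterateFrobenius K 2 m) (fun x : K => x ^ (2 ^ m - 1)) where
  two_eq_zero := CharTwo.two_eq_zero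
  invol x := by
    rw [iterateFrobenius_def, iterateFrobenius_def, ← pow_mul, ← hK, FiniteField.pow_card]
  map_zero := by
    have : 2 ^ 1 ≤ 2 ^ m := Nat.pow_le_pow_right (by norm_num) hm
    exact zero_pow (by omega)
  mul_self x := by
    have : 0 < 2 ^ m := by positivity
    rw [iterateFrobenius_def, ← pow_succ, Nat.sub_add_cancel this]

/-- A field of order `4 ^ m` contains the primitive cube roots of unity. -/
lemma exists_cube_root {m : ℕ} (hK : Fintype.card K = 2 ^ m * 2 ^ m) :
    ∃ ω : K, ω ^ 2 + ω + 1 = 0 := by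
  have : Fact (Nat.Prime 3) := ⟨Nat.prime_three⟩
  have hd : 3 ∣ Fintype.card Kˣ := by
    rw [Fintype.card_units, hK, ← mul_pow]
    simpa using Nat.sub_dvd_pow_sub_pow 4 1 m
  obtain ⟨g, hg⟩ := exists_prime_orderOf_dvd_card 3 hd
  have h3 : (g : K) ^ 3 = 1 := by
    rw [← Units.val_pow_eq_pow_val, ← hg, pow_orderOf_eq_one, Units.val_one]
  have h1 : (g : K) ≠ 1 := by
    intro e
    rw [Units.val_eq_one.1 e, orderOf_one] at hg
    omega
  refine ⟨g, mul_left_cancel₀ (sub_ne_zero.2 h1) ?_⟩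
  linear_combination h3

/-- The number of flats avoiding `0`; this is the whole count for even `m`. -/
lemma card_flatsAvoid_pow [CharP K 2] {m : ℕ} (hm : 1 ≤ m)
    (hK : Fintype.card K = 2 ^ m * 2 ^ m) :
    ((IsConjQuotient.flatsAvoid (fun x : K => x ^ (2 ^ m - 1))).card : ℚ) =
      ((2 : ℚ) ^ ((m : ℤ) - 2) - 1) * ((2 : ℚ) ^ ((m : ℤ) - 1) - 1) * (2 ^ (2 * m) - 1) / 3 := by
  have hq : 2 ≤ 2 ^ m := by simpa using Nat.pow_le_pow_right (n := 2) (by norm_num) hm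
  have h := (isConjQuotient_pow hm hK).card_flatsAvoid (fun a ha => card_fibre_pow hq hK ha)
  rw [hK] at h
  have h24 : ((IsConjQuotient.flatsAvoid (fun x : K => x ^ (2 ^ m - 1))).card : ℚ) * 24 =
      ((2 : ℚ) ^ m * 2 ^ m - 1) * ((2 ^ m - 2) * (2 ^ m - 4)) := by
    -- The truncated factor `q - 1 - 3` is harmless: for `q = 2` the factor `q - 2` vanishes.
    obtain rfl | hm2 := hm.eq_or_lt
    · have h' := congrArg (Nat.cast (R := ℚ)) h
      push_cast at h'
      norm_num at h' ⊢
      exact h'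
    · have hq4 : 4 ≤ 2 ^ m := by
        simpa using Nat.pow_le_pow_right (n := 2) (by norm_num) hm2
      obtain ⟨r, hr⟩ := Nat.exists_eq_add_of_le hq4
      have hr' : (2 : ℚ) ^ m = 4 + r := by exact_mod_cast hr
      have e1 : 2 ^ m - 1 - 1 = r + 2 := by omega
      have e2 : 2 ^ m - 1 - 3 = r := by omega
      have e3 : 2 ^ m * 2 ^ m - 1 = r * r + 8 * r + 15 := by
        rw [hr, Nat.sub_eq_iff_eq_add (by nlinarith)]
        ring
      rw [e1, e2, e3] at h
      have h' := congrArg (Nat.cast (R := ℚ)) h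
      push_cast at h'
      rw [h', hr']
      ring
  have z1 : (2 : ℚ) ^ ((m : ℤ) - 1) = 2 ^ m / 2 := by
    rw [zpow_sub₀ two_ne_zero, zpow_natCast, zpow_one]
  have z2 : (2 : ℚ) ^ ((m : ℤ) - 2) = 2 ^ m / 4 := by
    rw [zpow_sub₀ two_ne_zero, zpow_natCast]
    norm_num
  have z3 : (2 : ℚ) ^ (2 * m) = 2 ^ m * 2 ^ m := by ring
  rw [z1, z2, z3]
  linear_combination h24 / 24

end power

theorem card_vanishingFlats_pow_two_pow_m_sub_one (m : ℕ) (hm : 1 ≤ m)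
    (F : GaloisField 2 (2 * m) → GaloisField 2 (2 * m))
    (hF : ∀ X, F X = X ^ (2 ^ m - 1)) :
    (Even m → (Nat.card (vanishingFlats F) : ℚ) =
      ((2 : ℚ) ^ ((m : ℤ) - 2) - 1) * ((2 : ℚ) ^ ((m : ℤ) - 1) - 1) *
        (2 ^ (2 * m) - 1) / 3) ∧
    (Odd m → (Nat.card (vanishingFlats F) : ℚ) =
      (((2 : ℚ) ^ ((m : ℤ) - 2) - 1) * ((2 : ℚ) ^ ((m : ℤ) - 1) - 1) + 1) *
        (2 ^ (2 * m) - 1) / 3) := by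
  obtain rfl : F = fun X => X ^ (2 ^ m - 1) := funext hF
  have : Fintype (GaloisField 2 (2 * m)) := Fintype.ofFinite _
  have hK : Fintype.card (GaloisField 2 (2 * m)) = 2 ^ m * 2 ^ m := by
    rw [← Nat.card_eq_fintype_card, GaloisField.card 2 (2 * m) (by omega), two_mul, pow_add]
  have h := isConjQuotient_pow hm hK
  obtain ⟨ω, hω⟩ := exists_cube_root hK
  obtain ⟨heven, hodd⟩ := pow_two_pow_cube_root hω m
  rw [IsConjQuotient.card_vanishingFlats, Nat.cast_add, card_flatsAvoid_pow hm hK]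
  refine ⟨fun hm' => ?_, fun hm' => ?_⟩
  · rw [h.flatsThrough_eq_empty hω (by rw [iterateFrobenius_def, heven hm'])]
    simp
  · have hc := h.card_flatsThrough hω (by rw [iterateFrobenius_def, hodd hm'])
    rw [hK, mul_one] at hc
    have hpos : 1 ≤ 2 ^ m * 2 ^ m := Nat.one_le_iff_ne_zero.2 (by positivity)
    have hc' := congrArg (Nat.cast (R := ℚ)) hc
    push_cast [Nat.cast_sub hpos] at hc'
    have z3 : (2 : ℚ) ^ (2 * m) = 2 ^ m * 2 ^ m := by ring
    rw [z3]
    linear_combination -hc' / 3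
end
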